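/- For every Dyck path λ of order n, the total number of cover-inclusive Dyck tilings whose lower path is λ equals n! divided by the product, over all chords c of λ, of the length |c|; that is, |D(λ,*)| = n! / Π_{chords c of λ} |c|. -/

import Mathlib

open Finset

noncomputable section

/-- A Dyck path of order `n`: a word of `2n` steps (`true` = up-step `(+1,+1)`,
`false` = down-step `(+1,-1)`) from `(-n,0)` to `(n,0)` staying weakly above the x-axis. -/
structure DyckPath (n : ℕ) where
  step : Fin (2 * n) → Bool
  balanced : (Finset.univ.filter fun i => step i = true).card = n
  nonneg : ∀ k : ℕ, k ≤ 2 * n →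
    (Finset.univ.filter fun i : Fin (2 * n) => (i : ℕ) < k ∧ step i = false).card ≤
      (Finset.univ.filter fun i : Fin (2 * n) => (i : ℕ) < k ∧ step i = true).card

namespace DyckPath

/-- Height of the path above column `x` (columns run from `-n` to `n`). -/
def ht {n : ℕ} (P : DyckPath n) (x : ℤ) : ℤ :=
  ((Finset.univ.filter fun i : Fin (2 * n) => ((i : ℕ) : ℤ) < x + n ∧ P.step i = true).card : ℤ) -
    ((Finset.univ.filter fun i : Fin (2 * n) => ((i : ℕ) : ℤ) < x + n ∧ P.step i = false).card : ℤ)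

/-- Height of the path at lattice point number `k`, `0 ≤ k ≤ 2n`
(point `k` lies at column `k - n`). -/
def pt {n : ℕ} (P : DyckPath n) (k : ℕ) : ℤ := P.ht ((k : ℤ) - n)

end DyckPath

/-- `IsChord P p q`: the up-step at (0-indexed) position `p` matches the down-step at
position `q`, forming a chord of `P`. -/
def IsChord {n : ℕ} (P : DyckPath n) (p q : ℕ) : Prop :=
  p < q ∧ q < 2 * n ∧
    (∃ hp : p < 2 * n, P.step ⟨p, hp⟩ = true) ∧
    (∃ hq : q < 2 * n, P.step ⟨q, hq⟩ = false) ∧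
    P.pt (q + 1) = P.pt p ∧
    ∀ m : ℕ, p < m → m ≤ q → P.pt p < P.pt m

/-- A natural labeling of the chord poset of `P`: the chord labeled `i` has its up-step at
(0-indexed) position `l i` and matching down-step at position `r i`; distinct labels name
distinct chords; and if one chord is nested inside another it receives a larger label. -/
structure ChordLabeling {n : ℕ} (P : DyckPath n) where
  l : Fin n → ℕ
  r : Fin n → ℕ
  chord : ∀ i, IsChord P (l i) (r i)
  inj : Function.Injective l
  natural : ∀ i j : Fin n, l j < l i → r i < r j → j < i

/-- The length of the chord labeled `i`: the number of up steps of `P` between and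
including its two endpoints. -/
def chordLen {n : ℕ} {P : DyckPath n} (C : ChordLabeling P) (i : Fin n) : ℕ :=
  (Finset.univ.filter fun m : Fin (2 * n) =>
    C.l i ≤ (m : ℕ) ∧ (m : ℕ) ≤ C.r i ∧ P.step m = true).card

/-- The growth sequence `p_1, …, p_n` associated with a natural chord labeling:
`p i = #{j<i : l j < l i} + #{j<i : r j < l i}`. -/
def seqOf {n : ℕ} {P : DyckPath n} (C : ChordLabeling P) (i : Fin n) : ℕ :=
  (Finset.univ.filter fun j : Fin n => j < i ∧ C.l j < C.l i).card +
    (Finset.univ.filter fun j : Fin n => j < i ∧ C.r j < C.l i).card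

/-- `σ` is the standardization of the word `w` (with distinct letters). -/
def IsStandardization {n : ℕ} (w : Fin n → ℕ) (σ : Equiv.Perm (Fin n)) : Prop :=
  ∀ i j : Fin n, σ i < σ j ↔ w i < w j

/-- `σ ∈ 𝓛(P_λ)`: σ is `L₀ ∘ L⁻¹` for some natural labeling `L` of the chord poset,
equivalently the standardization of the word of left endpoints of a natural labeling. -/
def LinExt {n : ℕ} (P : DyckPath n) (σ : Equiv.Perm (Fin n)) : Prop :=
  ∃ C : ChordLabeling P, IsStandardization C.l σ

/-- Successor index in `Fin n` (used only under the guard `i+1 < n`). -/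
def nextIdx {n : ℕ} (i : Fin n) : Fin n := ⟨((i : ℕ) + 1) % n, Nat.mod_lt _ i.pos⟩

/-- Descent set of a word: positions `i` with `i+1 < n` and `w i > w (i+1)`. -/
def descentFinset {n : ℕ} (w : Fin n → ℕ) : Finset (Fin n) :=
  Finset.univ.filter fun i => (i : ℕ) + 1 < n ∧ w (nextIdx i) < w i

/-- Number of inversions of a word. -/
def wordInv {n : ℕ} (w : Fin n → ℕ) : ℕ :=
  (Finset.univ.filter fun p : Fin n × Fin n => p.1 < p.2 ∧ w p.2 < w p.1).card

/-- The word of values of a permutation. -/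
def permWord {n : ℕ} (σ : Equiv.Perm (Fin n)) : Fin n → ℕ := fun i => (σ i : ℕ)

/-- inv(σ). -/
def permInv {n : ℕ} (σ : Equiv.Perm (Fin n)) : ℕ := wordInv (permWord σ)

/-- des(σ). -/
def permDes {n : ℕ} (σ : Equiv.Perm (Fin n)) : ℕ := (descentFinset (permWord σ)).card

/-- `REM_i(w) = {k > i : w i > w k > w (i+1)}`, the right embraced numbers. -/
def remSet {n : ℕ} (w : Fin n → ℕ) (i : Fin n) : Finset (Fin n) :=
  Finset.univ.filter fun k => i < k ∧ w (nextIdx i) < w k ∧ w k < w i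

/-- desdif(σ) = Σ_{i ∈ DES σ} (σ i − σ (i+1)). -/
def desdif {n : ℕ} (σ : Equiv.Perm (Fin n)) : ℕ :=
  ∑ i ∈ descentFinset (permWord σ), (permWord σ i - permWord σ (nextIdx i))

/-- res(σ) = Σ_{i ∈ DES σ} #{k < i : σ i > σ k > σ (i+1)}. -/
def resStat {n : ℕ} (σ : Equiv.Perm (Fin n)) : ℕ :=
  ∑ i ∈ descentFinset (permWord σ),
    (Finset.univ.filter fun k : Fin n =>
      k < i ∧ permWord σ (nextIdx i) < permWord σ k ∧ permWord σ k < permWord σ i).card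

/-- The Mahonian statistic mad(σ) = desdif(σ) + res(σ). -/
def mad {n : ℕ} (σ : Equiv.Perm (Fin n)) : ℕ := desdif σ + resStat σ

/-- σ avoids the pattern 231. -/
def Avoids231 {n : ℕ} (σ : Equiv.Perm (Fin n)) : Prop :=
  ¬∃ i j k : Fin n, i < j ∧ j < k ∧ σ k < σ i ∧ σ i < σ j

/-- The boxes of the skew shape `lam/mu` (with `mu` weakly above `lam`), each box
recorded by its bottom corner (a lattice point `(x, z)` with `z ≡ x + n (mod 2)`). -/
def skewCells {n : ℕ} (lam mu : DyckPath n) : Finset (ℤ × ℤ) :=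
  ((Finset.Icc (-(n : ℤ)) n) ×ˢ (Finset.Icc (0 : ℤ) n)).filter fun c =>
    lam.ht c.1 ≤ c.2 ∧ c.2 + 2 ≤ mu.ht c.1 ∧ (c.2 - c.1 - n) % 2 = 0

/-- A Dyck tile, recorded by the set of bottom corners of its boxes: these form
a Dyck-path shape, i.e. a ±1-step lattice path whose two ends are lowest. -/
def IsDyckTile (t : Finset (ℤ × ℤ)) : Prop :=
  ∃ (a b : ℤ) (f : ℤ → ℤ), a ≤ b ∧
    (∀ x : ℤ, a ≤ x → x < b → f (x + 1) = f x + 1 ∨ f (x + 1) = f x - 1) ∧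
    f b = f a ∧ (∀ x : ℤ, a ≤ x → x ≤ b → f a ≤ f x) ∧
    t = (Finset.Icc a b).image fun x => (x, f x)

/-- A Dyck tiling of order `n`: a tiling of the skew shape between two Dyck paths of
order `n` by Dyck tiles. -/
structure DyckTiling (n : ℕ) where
  lower : DyckPath n
  upper : DyckPath n
  below : ∀ x : ℤ, lower.ht x ≤ upper.ht x
  tiles : Finset (Finset (ℤ × ℤ))
  isDyck : ∀ t ∈ tiles, IsDyckTile t
  disj : ∀ t ∈ tiles, ∀ u ∈ tiles, t ≠ u → Disjoint t u
  cover : tiles.biUnion id = skewCells lower upper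

namespace DyckTiling

/-- Number of boxes of the skew shape. -/
def area {n : ℕ} (T : DyckTiling n) : ℕ := (skewCells T.lower T.upper).card

/-- Number of tiles. -/
def numTiles {n : ℕ} (T : DyckTiling n) : ℕ := T.tiles.card

/-- art(T) = (area(T) + tiles(T)) / 2. -/
def art {n : ℕ} (T : DyckTiling n) : ℕ := (T.area + T.numTiles) / 2

/-- dis(T): the number of step positions where the lower path steps down while the
upper path steps up. -/
def dis {n : ℕ} (T : DyckTiling n) : ℕ :=
  (Finset.univ.filter fun i : Fin (2 * n) =>
    T.lower.step i = false ∧ T.upper.step i = true).card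

/-- Cover-inclusiveness: whenever a tile has a box strictly above a box of another tile,
its horizontal extent is contained in that of the other tile. -/
def CoverInclusive {n : ℕ} (T : DyckTiling n) : Prop :=
  ∀ t ∈ T.tiles, ∀ u ∈ T.tiles,
    (∃ p ∈ t, ∃ q ∈ u, (p : ℤ × ℤ).1 = (q : ℤ × ℤ).1 ∧ (q : ℤ × ℤ).2 < (p : ℤ × ℤ).2) →
    ∀ p ∈ t, ∃ y : ℤ, ((p : ℤ × ℤ).1, y) ∈ u

end DyckTiling

/-- Height function of the spread at column `s` of a Dyck path. -/
def spreadHt {n : ℕ} (P : DyckPath n) (s x : ℤ) : ℤ :=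
  if x < s then P.ht (x + 1) else if x = s then P.ht s + 1 else P.ht (x - 1)

/-- Spread of a tile at column `s`: points left of `s` move left, points right of `s`
move right, and a point at column `s` is duplicated upward. -/
def spreadTile (s : ℤ) (t : Finset (ℤ × ℤ)) : Finset (ℤ × ℤ) :=
  ((t.filter fun p => p.1 ≤ s).image fun p => (p.1 - 1, p.2)) ∪
    ((t.filter fun p => p.1 = s).image fun p => (p.1, p.2 + 1)) ∪
    ((t.filter fun p => s ≤ p.1).image fun p => (p.1 + 1, p.2))

/-- Spread of a set of tiles at column `s`. -/
def spreadTiles (s : ℤ) (ts : Finset (Finset (ℤ × ℤ))) : Finset (Finset (ℤ × ℤ)) :=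
  ts.image (spreadTile s)

/-- Column `c` is eligible for a tiling with upper-boundary height function `h` and
tile set `ts`: the upper boundary has an up step ending at column `c`, and its point at
column `c` is not the top corner of a one-box tile. -/
def EligibleCol (h : ℤ → ℤ) (ts : Finset (Finset (ℤ × ℤ))) (c : ℤ) : Prop :=
  h c = h (c - 1) + 1 ∧ ({(c, h c - 2)} : Finset (ℤ × ℤ)) ∉ ts

/-- `T'` is the result of the strip-grow map applied to `(T, s)`: spread `T` at `s` and
add a one-box tile on each up step of the (spread) upper boundary starting at a column
`≥ s` (i.e. strictly to the right of column `s`). -/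
def StripGrowRel {n : ℕ} (T : DyckTiling n) (s : ℤ) (T' : DyckTiling (n + 1)) : Prop :=
  (∀ x : ℤ, T'.lower.ht x = spreadHt T.lower s x) ∧
  (∀ x : ℤ, T'.upper.ht x =
    if s ≤ x ∧ spreadHt T.upper s (x + 1) = spreadHt T.upper s x + 1 then
      spreadHt T.upper s x + 2
    else spreadHt T.upper s x) ∧
  T'.tiles = spreadTiles s T.tiles ∪
    ((Finset.Icc s (n : ℤ)).filter fun x =>
        spreadHt T.upper s (x + 1) = spreadHt T.upper s x + 1).image
      (fun x => ({(x, spreadHt T.upper s x)} : Finset (ℤ × ℤ)))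

/-- `T'` is the result of the ribbon-grow map applied to `(T, s)`: spread `T` at `s`,
and if the special column `Q` of the spread tiling is strictly right of `s`, add a
ribbon of one-box tiles at all columns strictly between `s` and `Q`. -/
def RibbonGrowRel {n : ℕ} (T : DyckTiling n) (s : ℤ) (T' : DyckTiling (n + 1)) : Prop :=
  (∀ x : ℤ, T'.lower.ht x = spreadHt T.lower s x) ∧
  ∃ Q : ℤ,
    EligibleCol (spreadHt T.upper s) (spreadTiles s T.tiles) Q ∧
    (∀ c : ℤ, EligibleCol (spreadHt T.upper s) (spreadTiles s T.tiles) c → c ≤ Q) ∧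
    (∀ x : ℤ, T'.upper.ht x =
      if s < x ∧ x < Q then spreadHt T.upper s x + 2 else spreadHt T.upper s x) ∧
    T'.tiles = spreadTiles s T.tiles ∪
      (Finset.Ioo s Q).image (fun x => ({(x, spreadHt T.upper s x)} : Finset (ℤ × ℤ)))

/-- `s` is the special column of `T`: its rightmost eligible column. -/
def SpecialCol {n : ℕ} (T : DyckTiling n) (s : ℤ) : Prop :=
  EligibleCol T.upper.ht T.tiles s ∧ ∀ c : ℤ, EligibleCol T.upper.ht T.tiles c → c ≤ s

/-- In the strip-shrink map applied to `T'` with special column `s`, a one-box tile is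
removed at column `x`: `x` is right of `s` and there is a one-box tile there that is
part of an up step of the upper boundary. -/
def StripRemovedAt {n : ℕ} (T' : DyckTiling n) (s x : ℤ) : Prop :=
  s < x ∧ T'.upper.ht x = T'.upper.ht (x - 1) + 1 ∧
    ({(x, T'.upper.ht x - 2)} : Finset (ℤ × ℤ)) ∈ T'.tiles

instance {n : ℕ} (T' : DyckTiling n) (s x : ℤ) : Decidable (StripRemovedAt T' s x) := by
  unfold StripRemovedAt; infer_instance

/-- `(T, s)` is the result of the strip-shrink map applied to `T'`: `s` is the special
column of `T'`; all one-box tiles right of `s` lying on up steps of the upper boundary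
are removed; and the result is the spread of `T` at `s`. -/
def StripShrinkRel {n : ℕ} (T' : DyckTiling (n + 1)) (T : DyckTiling n) (s : ℤ) : Prop :=
  SpecialCol T' s ∧
  (∀ x : ℤ, spreadHt T.lower s x = T'.lower.ht x) ∧
  (∀ x : ℤ, spreadHt T.upper s x =
    if StripRemovedAt T' s x then T'.upper.ht x - 2 else T'.upper.ht x) ∧
  spreadTiles s T.tiles =
    T'.tiles \ (((Finset.Ioc s ((n : ℤ) + 1)).filter fun x => StripRemovedAt T' s x).image
      fun x => ({(x, T'.upper.ht x - 2)} : Finset (ℤ × ℤ)))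

/-- `(T, s)` is the result of the ribbon-shrink map applied to `T'`: `s` is the special
column of `T'`; the maximal run of topmost one-box tiles in columns `s+1, s+2, …` is
removed; and the result is the spread of `T` at `s`. -/
def RibbonShrinkRel {n : ℕ} (T' : DyckTiling (n + 1)) (T : DyckTiling n) (s : ℤ) : Prop :=
  SpecialCol T' s ∧
  ∃ r : ℤ, s < r ∧
    (∀ x : ℤ, s < x → x < r → ({(x, T'.upper.ht x - 2)} : Finset (ℤ × ℤ)) ∈ T'.tiles) ∧
    ({(r, T'.upper.ht r - 2)} : Finset (ℤ × ℤ)) ∉ T'.tiles ∧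
    (∀ x : ℤ, spreadHt T.lower s x = T'.lower.ht x) ∧
    (∀ x : ℤ, spreadHt T.upper s x =
      if s < x ∧ x < r then T'.upper.ht x - 2 else T'.upper.ht x) ∧
    spreadTiles s T.tiles =
      T'.tiles \ ((Finset.Ioo s r).image fun x => ({(x, T'.upper.ht x - 2)} : Finset (ℤ × ℤ)))

/-- `IsDTS n p T`: `T` is the Dyck tiling `DTS(p_1, …, p_n)` (indices 0-based, so the
growth column for step `i` is `p i - i`). -/
inductive IsDTS : (n : ℕ) → (Fin n → ℕ) → DyckTiling n → Prop where
  | nil (p : Fin 0 → ℕ) (T : DyckTiling 0) : IsDTS 0 p T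
  | cons (n : ℕ) (p : Fin (n + 1) → ℕ) (T : DyckTiling n) (T' : DyckTiling (n + 1)) :
      IsDTS n (fun i => p i.castSucc) T →
      StripGrowRel T ((p (Fin.last n) : ℤ) - n) T' → IsDTS (n + 1) p T'

/-- `IsDTR n p T`: `T` is the Dyck tiling `DTR(p_1, …, p_n)`. -/
inductive IsDTR : (n : ℕ) → (Fin n → ℕ) → DyckTiling n → Prop where
  | nil (p : Fin 0 → ℕ) (T : DyckTiling 0) : IsDTR 0 p T
  | cons (n : ℕ) (p : Fin (n + 1) → ℕ) (T : DyckTiling n) (T' : DyckTiling (n + 1)) :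
      IsDTR n (fun i => p i.castSucc) T →
      RibbonGrowRel T ((p (Fin.last n) : ℤ) - n) T' → IsDTR (n + 1) p T'

/-- `T = DTS(λ, σ)`. -/
def IsDTSof {n : ℕ} (lam : DyckPath n) (σ : Equiv.Perm (Fin n)) (T : DyckTiling n) : Prop :=
  ∃ C : ChordLabeling lam, IsStandardization C.l σ ∧ IsDTS n (seqOf C) T

/-- `T = DTR(λ, σ)`. -/
def IsDTRof {n : ℕ} (lam : DyckPath n) (σ : Equiv.Perm (Fin n)) (T : DyckTiling n) : Prop :=
  ∃ C : ChordLabeling lam, IsStandardization C.l σ ∧ IsDTR n (seqOf C) T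

/-- Increment `a` if it exceeds `p`. -/
def bump (p a : ℕ) : ℕ := if p < a then a + 1 else a

/-- The perfect matching `match(p_1, …, p_n)` of `{1, …, 2n}`. -/
def matchSeq : (n : ℕ) → (Fin n → ℕ) → Finset (ℕ × ℕ)
  | 0, _ => ∅
  | n + 1, p =>
    ((matchSeq n fun i => p i.castSucc).image fun q =>
      (bump (p (Fin.last n)) q.1, bump (p (Fin.last n)) q.2)) ∪
      {(p (Fin.last n) + 1, 2 * (n + 1))}

/-- The number of nestings of a matching: pairs `(a,b)`, `(c,d)` with `c < a < b < d`. -/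
def nestings (M : Finset (ℕ × ℕ)) : ℕ :=
  ((M ×ˢ M).filter fun q => q.2.1 < q.1.1 ∧ q.1.1 < q.1.2 ∧ q.1.2 < q.2.2).card

/-- `w` is the min-word of `M`: the list of the smaller elements of the pairs of `M`,
sorted by the larger elements. -/
def IsMinWord (n : ℕ) (M : Finset (ℕ × ℕ)) (w : Fin n → ℕ) : Prop :=
  ∃ b : Fin n → ℕ, StrictMono b ∧ (∀ i, w i < b i) ∧
    M = Finset.univ.image fun i => (w i, b i)

/-- The number of tiles of `T` containing boxes over both endpoint columns of the
chord with endpoints at step positions `p < q`. -/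
def chordTileCount {n : ℕ} (T : DyckTiling n) (p q : ℕ) : ℕ :=
  (T.tiles.filter fun t =>
    (∃ c ∈ t, (c : ℤ × ℤ).1 = (p : ℤ) + 1 - n) ∧ (∃ c ∈ t, (c : ℤ × ℤ).1 = (q : ℤ) - n)).card

/-- A Dyck tableau of order `n` over the zigzag path `Z` of order `n+1`: a skew shape
`Z/μ` with `n` dots, one in each column of the skew shape through a valley of `Z`. -/
structure DyckTableau (n : ℕ) (Z : DyckPath (n + 1)) where
  upper : DyckPath (n + 1)
  below : ∀ x : ℤ, Z.ht x ≤ upper.ht x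
  dots : Finset (ℤ × ℤ)
  sub : dots ⊆ skewCells Z upper
  card_dots : dots.card = n
  valley : ∀ x : ℤ, Z.ht (x - 1) = Z.ht x + 1 → Z.ht (x + 1) = Z.ht x + 1 →
    (dots.filter fun c => c.1 = x).card = 1

/-- The `q`-integer `[m]_q = 1 + q + ⋯ + q^(m-1)` as a polynomial. -/
def qint (m : ℕ) : Polynomial ℤ := ∑ i ∈ Finset.range m, Polynomial.X ^ i

/-- The `q`-factorial `[n]_q!`. -/
def qfact (n : ℕ) : Polynomial ℤ := ∏ i ∈ Finset.range n, qint (i + 1)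


namespace DyckCount

/-! ### Plane forests and their words -/

/-- Plane forests, encoding Dyck words through the decomposition `U l D r`. -/
inductive Forest : Type
  | nil : Forest
  | node (l r : Forest) : Forest

namespace Forest

/-- The Dyck word of a forest (`true` is an up step). -/
def word : Forest → List Bool
  | nil => []
  | node l r => true :: (l.word ++ false :: r.word)

/-- Number of nodes. -/
def size : Forest → ℕ
  | nil => 0
  | node l r => l.size + 1 + r.size

/-- Product of the sizes of all subtrees. -/
def hookProd : Forest → ℕ
  | nil => 1
  | node l r => (l.size + 1) * (l.hookProd * r.hookProd)

/-- The factor `(a + size)! / (a! * hookProd)`, in recursive form. -/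
def factor : Forest → ℕ → ℕ
  | nil, _ => 1
  | node l r, a => (∑ e ∈ range (a + 1), l.factor e) * r.factor (a + (l.size + 1))

theorem factor_mul (t : Forest) (a : ℕ) :
    t.factor a * t.hookProd * a.factorial = (a + t.size).factorial := by
  induction t generalizing a with
  | nil => simp [factor, hookProd, size]
  | node l r ihl ihr =>
    have key : ∀ a : ℕ, (∑ e ∈ range (a + 1), l.factor e) * ((l.size + 1) * l.hookProd) *
        a.factorial = (a + (l.size + 1)).factorial := by
      intro a
      induction a with
      | zero =>
        have h := ihl 0
        simp only [Nat.factorial_zero, mul_one, zero_add, sum_range_one] at h ⊢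
        rw [Nat.factorial_succ, ← h]
        ring
      | succ a ih =>
        have h := ihl (a + 1)
        rw [sum_range_succ, show a + 1 + (l.size + 1) = (a + 1 + l.size) + 1 by ring,
          Nat.factorial_succ (a + 1 + l.size), ← h]
        have h2 : (a + 1 + l.size).factorial = (a + (l.size + 1)).factorial := by
          congr 1; ring
        rw [h2, ← ih] at h
        have h3 := congrArg (fun z => (a + 1) * z) h
        simp only [Nat.factorial_succ] at h3 ⊢
        linear_combination -h3
    have h := ihr (a + (l.size + 1))
    simp only [factor, hookProd, size]
    rw [show a + (l.size + 1 + r.size) = a + (l.size + 1) + r.size by ring, ← h, ← key a]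
    ring

end Forest

/-! ### Counting runs of the stack automaton -/

/-- Successor states in the stack automaton describing a tiling column by column: the top of the
stack is the number of tiles over the column, the deeper entries are the numbers of tiles spanning
the chords that enclose the column. -/
def next : Bool → List ℕ → Finset (List ℕ)
  | true, i :: r => (Icc (r.headD 0) i).image (fun t => i :: t :: r) ∪
      (Ico (r.headD 0) i).image (fun t => (i - 1) :: t :: r)
  | false, i :: _ :: r => {i :: r, (i + 1) :: r}
  | _, _ => ∅

/-- Number of accepting runs reading a word from a given state. -/
def runCount : List Bool → List ℕ → ℕ
  | [], S => if S = [0] then 1 else 0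
  | b :: w, S => ∑ S' ∈ next b S, runCount w S'

theorem runCount_up (w : List Bool) (i : ℕ) (r : List ℕ) :
    runCount (true :: w) (i :: r) = ∑ t ∈ Icc (r.headD 0) i, runCount w (i :: t :: r) +
      ∑ t ∈ Ico (r.headD 0) i, runCount w ((i - 1) :: t :: r) := by
  rw [runCount, next, sum_union, sum_image, sum_image]
  · intro x _ y _ h; simpa using h
  · intro x _ y _ h; simpa using h
  · rw [disjoint_left]
    simp only [mem_image, mem_Icc, mem_Ico, not_exists, not_and]
    rintro _ ⟨t, _, rfl⟩ s hs h
    simp only [List.cons.injEq] at h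
    omega

theorem runCount_down (w : List Bool) (i t : ℕ) (r : List ℕ) :
    runCount (false :: w) (i :: t :: r) = runCount w (i :: r) + runCount w ((i + 1) :: r) := by
  rw [runCount, next, sum_pair]
  simp

/-- The operator `1 + shift` on sequences. -/
def addShift (φ : ℕ → ℕ) : ℕ → ℕ := fun s => φ s + φ (s + 1)

theorem iterate_addShift_add (N : ℕ) (φ ψ : ℕ → ℕ) :
    addShift^[N] (fun s => φ s + ψ s) = fun s => addShift^[N] φ s + addShift^[N] ψ s := by
  induction N generalizing φ ψ with
  | zero => rfl
  | succ N ih =>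
    rw [Function.iterate_succ_apply, Function.iterate_succ_apply, Function.iterate_succ_apply, ← ih]
    congr 1
    funext s
    simp only [addShift]
    ring

theorem iterate_addShift_mul (N c : ℕ) (φ : ℕ → ℕ) :
    addShift^[N] (fun s => c * φ s) = fun s => c * addShift^[N] φ s := by
  induction N generalizing φ with
  | zero => rfl
  | succ N ih =>
    rw [Function.iterate_succ_apply, Function.iterate_succ_apply, ← ih]
    congr 1
    funext s
    simp only [addShift]
    ring

theorem iterate_addShift_translate (N t : ℕ) (φ : ℕ → ℕ) :
    addShift^[N] (fun s => φ (t + s)) = fun s => addShift^[N] φ (t + s) := by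
  induction N generalizing φ with
  | zero => rfl
  | succ N ih =>
    rw [Function.iterate_succ_apply, Function.iterate_succ_apply, ← ih]
    rfl

/-- The sequence obtained from a two-variable array by the sums over an up step. -/
def upSum (X : ℕ → ℕ → ℕ) (i : ℕ) : ℕ :=
  ∑ t ∈ range (i + 1), X t (i - t) + ∑ t ∈ range i, X t (i - 1 - t)

theorem addShift_upSum (X : ℕ → ℕ → ℕ) :
    addShift (upSum X) =
      fun i => (X i 0 + X (i + 1) 0) + upSum (fun t => addShift (X t)) i := by
  funext i
  have h1 : ∀ j : ℕ, ∑ t ∈ range (j + 1), X t (j - t) =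
      X j 0 + ∑ t ∈ range j, X t (j - 1 - t + 1) := by
    intro j
    rw [sum_range_succ, Nat.sub_self, add_comm]
    congr 1
    refine sum_congr rfl fun t ht => ?_
    rw [mem_range] at ht
    congr 1
    omega
  simp only [addShift, upSum, Nat.add_sub_cancel, sum_add_distrib]
  rw [h1 (i + 1), h1 i]
  simp only [Nat.add_sub_cancel]
  ring

theorem iterate_addShift_upSum (a : ℕ) (X : ℕ → ℕ → ℕ) :
    addShift^[a] (upSum X) 0 =
      ∑ e ∈ range (a + 1), addShift^[a - e] (fun t => addShift^[e] (X t) 0) 0 := by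
  induction a generalizing X with
  | zero => simp [upSum]
  | succ a ih =>
    rw [Function.iterate_succ_apply, addShift_upSum, iterate_addShift_add]
    simp only
    rw [ih, sum_range_succ' _ (a + 1), add_comm]
    congr 1
    refine sum_congr rfl fun e _ => ?_
    simp only [Function.iterate_succ_apply, Nat.add_sub_add_right]

theorem iterate_addShift_runCount (τ : Forest) (a : ℕ) (w : List Bool) (r : List ℕ) :
    addShift^[a] (fun i => runCount (τ.word ++ w) ((r.headD 0 + i) :: r)) 0 =
      τ.factor a * addShift^[a + τ.size] (fun j => runCount w ((r.headD 0 + j) :: r)) 0 := by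
  induction τ generalizing a w r with
  | nil => simp [Forest.word, Forest.factor, Forest.size]
  | node l r' ihl ihr =>
    set f := r.headD 0 with hf
    set φ : ℕ → ℕ := fun j => runCount (r'.word ++ w) ((f + j) :: r) with hφ
    have h1 : (fun i => runCount ((Forest.node l r').word ++ w) ((f + i) :: r)) =
        upSum fun t s => runCount (l.word ++ (false :: (r'.word ++ w)))
          (((f + t) + s) :: (f + t) :: r) := by
      funext i
      simp only [Forest.word, List.cons_append, List.append_assoc]
      rw [runCount_up, ← hf]
      simp only [upSum]
      congr 1
      · rw [← Finset.Ico_succ_right_eq_Icc, Finset.sum_Ico_eq_sum_range]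
        simp only [Order.succ_eq_add_one]
        rw [show f + i + 1 - f = i + 1 by omega]
        refine sum_congr rfl fun t ht => ?_
        rw [mem_range] at ht
        rw [show f + t + (i - t) = f + i by omega]
      · rw [Finset.sum_Ico_eq_sum_range, show f + i - f = i by omega]
        refine sum_congr rfl fun t ht => ?_
        rw [mem_range] at ht
        rw [show f + t + (i - 1 - t) = f + i - 1 by omega]
    rw [h1, iterate_addShift_upSum]
    have h2 : ∀ e t : ℕ, addShift^[e] (fun s => runCount (l.word ++ (false :: (r'.word ++ w)))
          (((f + t) + s) :: (f + t) :: r)) 0 =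
        l.factor e * addShift^[e + (l.size + 1)] φ t := by
      intro e t
      have h := ihl e (false :: (r'.word ++ w)) ((f + t) :: r)
      simp only [List.headD_cons] at h
      rw [h, ← add_assoc, Function.iterate_succ_apply]
      congr 1
      have h3 : (fun j => runCount (false :: (r'.word ++ w)) ((f + t + j) :: (f + t) :: r)) =
          fun j => addShift φ (t + j) := by
        funext j
        rw [runCount_down]
        simp only [addShift, hφ]
        rw [show f + t + j + 1 = f + (t + j + 1) by ring, show f + t + j = f + (t + j) by ring]
      rw [h3, iterate_addShift_translate]
      rfl
    have h4 : ∀ e ∈ range (a + 1), addShift^[a - e] (fun t =>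
        addShift^[e] (fun s => runCount (l.word ++ (false :: (r'.word ++ w)))
          (((f + t) + s) :: (f + t) :: r)) 0) 0 =
        l.factor e * addShift^[a + (l.size + 1)] φ 0 := by
      intro e he
      rw [mem_range] at he
      simp only [h2]
      rw [iterate_addShift_mul]
      simp only
      rw [← Function.iterate_add_apply, show a - e + (e + (l.size + 1)) = a + (l.size + 1) by omega]
    rw [sum_congr rfl h4, ← sum_mul, hφ, hf, ihr, Forest.factor, Forest.size, ← mul_assoc,
      show a + (l.size + 1) + r'.size = a + (l.size + 1 + r'.size) by ring]

theorem runCount_word_mul (τ : Forest) :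
    runCount τ.word [0] * τ.hookProd = τ.size.factorial := by
  have h := iterate_addShift_runCount τ 0 [] []
  have h0 : addShift (fun j => runCount [] [j]) = fun j => runCount [] [j] := by
    funext j
    simp [addShift, runCount]
  have h1 : addShift^[τ.size] (fun j => runCount [] [j]) = fun j => runCount [] [j] :=
    Function.iterate_fixed h0 _
  have h2 := τ.factor_mul 0
  simp only [Function.iterate_zero, id_eq, List.append_nil, List.headD_nil, zero_add, h1] at h
  rw [h]
  simpa [runCount] using h2

/-! ### Height functions of words -/

/-- The height function of an arbitrary word of up and down steps. -/
def wordHt {n : ℕ} (s : Fin (2 * n) → Bool) (x : ℤ) : ℤ :=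
  ((univ.filter fun i : Fin (2 * n) => ((i : ℕ) : ℤ) < x + n ∧ s i = true).card : ℤ) -
    ((univ.filter fun i : Fin (2 * n) => ((i : ℕ) : ℤ) < x + n ∧ s i = false).card : ℤ)

theorem wordHt_eq_sum {n : ℕ} (s : Fin (2 * n) → Bool) (x : ℤ) :
    wordHt s x = ∑ i : Fin (2 * n),
      if ((i : ℕ) : ℤ) < x + n then (if s i = true then 1 else -1 : ℤ) else 0 := by
  rw [wordHt, card_filter, card_filter]
  push_cast
  rw [← sum_sub_distrib]
  refine sum_congr rfl fun i _ => ?_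
  cases s i <;> by_cases h : ((i : ℕ) : ℤ) < x + n <;> simp [h]

theorem wordHt_succ {n : ℕ} (s : Fin (2 * n) → Bool) (i : Fin (2 * n)) (x : ℤ)
    (hx : x + n = (i : ℕ)) :
    wordHt s (x + 1) = wordHt s x + if s i = true then 1 else -1 := by
  rw [wordHt_eq_sum, wordHt_eq_sum, ← sub_eq_iff_eq_add', ← sum_sub_distrib,
    sum_eq_single_of_mem i (mem_univ i)]
  · have e1 : ((i : ℕ) : ℤ) < x + 1 + n := by omega
    have e2 : ¬((i : ℕ) : ℤ) < x + n := by omega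
    rw [if_pos e1, if_neg e2, sub_zero]
  · intro j _ hj
    have hj' : (j : ℕ) ≠ i := fun h => hj (Fin.ext h)
    by_cases h : ((j : ℕ) : ℤ) < x + n
    · rw [if_pos (by omega), if_pos h, sub_self]
    · rw [if_neg (by omega), if_neg h, sub_self]

theorem wordHt_of_le {n : ℕ} (s : Fin (2 * n) → Bool) (x : ℤ) (hx : x ≤ -n) :
    wordHt s x = 0 := by
  rw [wordHt_eq_sum]
  exact sum_eq_zero fun i _ => if_neg (by omega)

theorem wordHt_of_ge {n : ℕ} (s : Fin (2 * n) → Bool) (x : ℤ) (hx : n ≤ x) :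
    wordHt s x = 2 * (univ.filter fun i => s i = true).card - 2 * n := by
  have h1 : wordHt s x = ((univ.filter fun i => s i = true).card : ℤ) -
      ((univ.filter fun i => ¬ s i = true).card : ℤ) := by
    rw [wordHt]
    congr 3
    · ext i; simp only [mem_filter, mem_univ, true_and]
      exact ⟨fun h => h.2, fun h => ⟨by omega, h⟩⟩
    · ext i; simp only [mem_filter, mem_univ, true_and, Bool.not_eq_true]
      exact ⟨fun h => h.2, fun h => ⟨by omega, h⟩⟩
  have h2 := card_filter_add_card_filter_not (s := (univ : Finset (Fin (2 * n))))
    (fun i => s i = true)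
  rw [card_univ, Fintype.card_fin] at h2
  rw [h1]
  omega

section Path

variable {n : ℕ} (P : DyckPath n)

theorem ht_of_le (x : ℤ) (hx : x ≤ -n) : P.ht x = 0 := wordHt_of_le P.step x hx

theorem ht_of_ge (x : ℤ) (hx : n ≤ x) : P.ht x = 0 := by
  have h := wordHt_of_ge P.step x hx
  rw [P.balanced] at h
  exact h.trans (by ring)

theorem ht_succ (i : Fin (2 * n)) (x : ℤ) (hx : x + n = (i : ℕ)) :
    P.ht (x + 1) = P.ht x + if P.step i = true then 1 else -1 := wordHt_succ P.step i x hx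

theorem ht_nonneg (x : ℤ) : 0 ≤ P.ht x := by
  by_cases h1 : x ≤ -n
  · rw [ht_of_le P x h1]
  by_cases h2 : n ≤ x
  · rw [ht_of_ge P x h2]
  have h := P.nonneg (x + n).toNat (by omega)
  have h3 : ∀ i : Fin (2 * n), (i : ℕ) < (x + n).toNat ↔ ((i : ℕ) : ℤ) < x + n := by
    intro i; omega
  simp only [h3] at h
  rw [DyckPath.ht]
  omega

theorem ht_step (x : ℤ) (h1 : -n ≤ x) (h2 : x < n) :
    P.ht (x + 1) = P.ht x + 1 ∨ P.ht (x + 1) = P.ht x - 1 := by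
  have h := ht_succ P ⟨(x + n).toNat, by omega⟩ x (by simp only; omega)
  rw [h]
  split_ifs
  · exact Or.inl rfl
  · exact Or.inr rfl

theorem ht_parity (x : ℤ) (h1 : -n ≤ x) (h2 : x ≤ n) : (P.ht x - x - n) % 2 = 0 := by
  induction x, h1 using Int.leInduction with
  | base => rw [ht_of_le P _ le_rfl]; omega
  | succ x hx ih =>
    have := ih (by omega)
    have := ht_step P x hx (by omega)
    omega

theorem ht_le_left (x : ℤ) (h1 : -n ≤ x) (h2 : x ≤ n) : P.ht x ≤ x + n := by
  induction x, h1 using Int.leInduction with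
  | base => rw [ht_of_le P _ le_rfl]; omega
  | succ x hx ih =>
    have := ih (by omega)
    have := ht_step P x hx (by omega)
    omega

theorem ht_le_right (x : ℤ) (h1 : -n ≤ x) (h2 : x ≤ n) : P.ht x ≤ n - x := by
  induction x, h2 using Int.leInductionDown with
  | base => rw [ht_of_ge P _ le_rfl]; omega
  | pred x hx ih =>
    have := ih (by omega)
    have := ht_step P (x - 1) (by omega) (by omega)
    rw [sub_add_cancel] at this
    omega

theorem path_ext (P Q : DyckPath n) (h : ∀ x : ℤ, -n ≤ x → x ≤ n → P.ht x = Q.ht x) : P = Q := by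
  have hs : P.step = Q.step := by
    funext i
    have hi := i.2
    have h1 := ht_succ P i ((i : ℕ) - n) (by ring)
    have h2 := ht_succ Q i ((i : ℕ) - n) (by ring)
    rw [h _ (by omega) (by omega), h _ (by omega) (by omega), h2] at h1
    cases hp : P.step i <;> cases hq : Q.step i <;> simp [hp, hq] at h1 ⊢
  cases P; cases Q; cases hs; rfl

theorem exists_path (h : ℤ → ℤ) (h0 : h (-n) = 0) (h1 : h n = 0)
    (hs : ∀ x, -(n : ℤ) ≤ x → x < n → h (x + 1) = h x + 1 ∨ h (x + 1) = h x - 1)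
    (hn : ∀ x, -(n : ℤ) ≤ x → x ≤ n → 0 ≤ h x) :
    ∃ P : DyckPath n, ∀ x, -(n : ℤ) ≤ x → x ≤ n → P.ht x = h x := by
  let s : Fin (2 * n) → Bool := fun i => decide (h ((i : ℕ) - n + 1) = h ((i : ℕ) - n) + 1)
  have key : ∀ x, -(n : ℤ) ≤ x → x ≤ n → wordHt s x = h x := by
    intro x hx
    induction x, hx using Int.leInduction with
    | base => intro _; rw [wordHt_of_le s _ le_rfl, h0]
    | succ x hx ih =>
      intro hx'
      have h2 := wordHt_succ s ⟨(x + n).toNat, by omega⟩ x (by simp only; omega)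
      have h3 : (((x + n).toNat : ℕ) : ℤ) - n = x := by omega
      rw [h2, ih (by omega)]
      simp only [s, h3, decide_eq_true_eq]
      rcases hs x hx (by omega) with h4 | h4
      · rw [if_pos h4, h4]
      · rw [if_neg (by omega), h4]; ring
  refine ⟨⟨s, ?_, ?_⟩, key⟩
  · have h2 := wordHt_of_ge s n le_rfl
    rw [key n (by omega) le_rfl, h1] at h2
    omega
  · intro k hk
    have h2 := hn ((k : ℤ) - n) (by omega) (by omega)
    rw [← key _ (by omega) (by omega), wordHt] at h2
    simp only [sub_add_cancel, Nat.cast_lt] at h2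
    omega

end Path

/-! ### Words of Dyck paths and hook products -/

/-- Number of up steps read before the path, currently `d` steps above its base, returns to the
base. -/
def hookFrom : ℕ → List Bool → ℕ
  | _, [] => 0
  | d, true :: w => hookFrom (d + 1) w + 1
  | d, false :: w => if d ≤ 1 then 0 else hookFrom (d - 1) w

/-- Product of the chord lengths of a word. -/
def wordProd : List Bool → ℕ
  | [] => 1
  | true :: w => hookFrom 0 (true :: w) * wordProd w
  | false :: w => wordProd w

theorem hookFrom_word_append (τ : Forest) (d : ℕ) (w : List Bool) :
    hookFrom (d + 1) (τ.word ++ w) = τ.size + hookFrom (d + 1) w := by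
  induction τ generalizing d w with
  | nil => simp [Forest.word, Forest.size]
  | node l r ihl ihr =>
    simp only [Forest.word, Forest.size, List.cons_append, List.append_assoc, hookFrom]
    rw [ihl, hookFrom, if_neg (by omega), Nat.add_sub_cancel, ihr]
    ring

theorem wordProd_word_append (τ : Forest) (w : List Bool) :
    wordProd (τ.word ++ w) = τ.hookProd * wordProd w := by
  induction τ generalizing w with
  | nil => simp [Forest.word, Forest.hookProd]
  | node l r ihl ihr =>
    simp only [Forest.word, Forest.hookProd, List.cons_append, List.append_assoc, wordProd,
      hookFrom]
    rw [ihl, hookFrom_word_append, wordProd, ihr, hookFrom, if_pos (by omega)]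
    ring

/-- The word, started at height `h`, stays nonnegative and ends at height `0`. -/
def EndsAtZero : ℕ → List Bool → Prop
  | h, [] => h = 0
  | h, true :: w => EndsAtZero (h + 1) w
  | h, false :: w => 0 < h ∧ EndsAtZero (h - 1) w

theorem exists_forests (w : List Bool) (h : ℕ) (hw : EndsAtZero h w) :
    ∃ (τ : Forest) (ts : List Forest), ts.length = h ∧
      w = τ.word ++ (ts.map fun t => false :: t.word).flatten := by
  induction w generalizing h with
  | nil => exact ⟨.nil, [], by simpa [EndsAtZero] using hw.symm, rfl⟩
  | cons b w ih =>
    cases b with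
    | true =>
      obtain ⟨τ, ts, hl, rfl⟩ := ih _ hw
      match ts, hl with
      | t :: ts, hl =>
        refine ⟨.node τ t, ts, by simpa using hl, ?_⟩
        simp [Forest.word]
    | false =>
      obtain ⟨τ, ts, hl, rfl⟩ := ih _ hw.2
      have := hw.1
      refine ⟨.nil, τ :: ts, by simp only [List.length_cons]; omega, ?_⟩
      simp [Forest.word]

theorem length_word (τ : Forest) : τ.word.length = 2 * τ.size := by
  induction τ with
  | nil => rfl
  | node l r ihl ihr =>
    simp only [Forest.word, Forest.size, List.length_cons, List.length_append, ihl, ihr]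
    ring

/-- The word of a Dyck path. -/
def pathWord {n : ℕ} (P : DyckPath n) : List Bool := List.ofFn P.step

theorem pathWord_length {n : ℕ} (P : DyckPath n) : (pathWord P).length = 2 * n := by
  simp [pathWord]

theorem pathWord_drop {n : ℕ} (P : DyckPath n) (m : ℕ) (hm : m < 2 * n) :
    (pathWord P).drop m = P.step ⟨m, hm⟩ :: (pathWord P).drop (m + 1) := by
  rw [List.drop_eq_getElem_cons (by rwa [pathWord_length])]
  simp [pathWord]

theorem pt_succ {n : ℕ} (P : DyckPath n) (m : ℕ) (hm : m < 2 * n) :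
    P.pt (m + 1) = P.pt m + if P.step ⟨m, hm⟩ = true then 1 else -1 := by
  have h := ht_succ P ⟨m, hm⟩ ((m : ℤ) - n) (by ring)
  rw [DyckPath.pt, DyckPath.pt, ← h]
  congr 1
  push_cast
  ring

theorem endsAtZero_drop {n : ℕ} (P : DyckPath n) (m : ℕ) (hm : m ≤ 2 * n) :
    EndsAtZero (P.pt m).toNat ((pathWord P).drop m) := by
  induction hm using Nat.decreasingInduction with
  | self =>
    rw [List.drop_eq_nil_of_le (pathWord_length P).le, EndsAtZero, DyckPath.pt, ht_of_ge P _
      (by push_cast; omega)]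
    rfl
  | of_succ m hm ih =>
    have h := pt_succ P m hm
    have h0 : 0 ≤ P.pt m := ht_nonneg P _
    have h1 : 0 ≤ P.pt (m + 1) := ht_nonneg P _
    rw [pathWord_drop P m hm]
    cases hs : P.step ⟨m, hm⟩ with
    | true =>
      rw [hs, if_pos rfl] at h
      rw [EndsAtZero, show (P.pt m).toNat + 1 = (P.pt (m + 1)).toNat by omega]
      exact ih
    | false =>
      rw [hs, if_neg (by simp)] at h
      rw [EndsAtZero, show (P.pt m).toNat - 1 = (P.pt (m + 1)).toNat by omega]
      exact ⟨by omega, ih⟩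

theorem exists_forest {n : ℕ} (P : DyckPath n) :
    ∃ τ : Forest, pathWord P = τ.word ∧ τ.size = n := by
  have h := endsAtZero_drop P 0 (Nat.zero_le _)
  have h0 : P.pt 0 = 0 := by rw [DyckPath.pt, ht_of_le P _ (by simp)]
  rw [h0, List.drop_zero] at h
  obtain ⟨τ, ts, hl, hw⟩ := exists_forests _ _ h
  have hts : ts = [] := List.length_eq_zero_iff.mp hl
  subst hts
  simp only [List.map_nil, List.flatten_nil, List.append_nil] at hw
  have h1 := length_word τ
  rw [← hw, pathWord_length] at h1
  exact ⟨τ, hw, by omega⟩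

theorem hookFrom_eq_card {n : ℕ} (P : DyckPath n) (p q : ℕ) (h : IsChord P p q) (m : ℕ)
    (hpm : p ≤ m) (hmq : m ≤ q) :
    hookFrom (P.pt m - P.pt p).toNat ((pathWord P).drop m) =
      (univ.filter fun i : Fin (2 * n) => m ≤ (i : ℕ) ∧ (i : ℕ) ≤ q ∧ P.step i = true).card := by
  obtain ⟨hpq, hq, ⟨hp', hup⟩, ⟨_, hdown⟩, hret, habove⟩ := h
  induction hmq using Nat.decreasingInduction with
  | self =>
    have h1 := pt_succ P q hq
    rw [hdown, if_neg (by simp), hret] at h1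
    rw [pathWord_drop P q hq, hdown, hookFrom, if_pos (by omega), eq_comm, card_eq_zero,
      filter_eq_empty_iff]
    rintro i - ⟨h2, h3, h4⟩
    have : i = ⟨q, hq⟩ := Fin.ext (le_antisymm h3 h2)
    rw [this, hdown] at h4
    simp at h4
  | of_succ m hm ih =>
    have hm2 : m < 2 * n := by omega
    have h1 := pt_succ P m hm2
    have h2 := ih (by omega)
    have h3 := habove (m + 1) (by omega) (by omega)
    have h4 : P.pt p ≤ P.pt m := by
      rcases hpm.eq_or_lt with h5 | h5
      · rw [h5]
      · exact (habove m h5 (by omega)).le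
    rw [pathWord_drop P m hm2]
    cases hs : P.step ⟨m, hm2⟩ with
    | true =>
      rw [hs, if_pos rfl] at h1
      rw [hookFrom, show (P.pt m - P.pt p).toNat + 1 = (P.pt (m + 1) - P.pt p).toNat by omega, h2,
        ← card_insert_of_notMem (a := (⟨m, hm2⟩ : Fin (2 * n))) (by simp)]
      congr 1
      ext i
      simp only [mem_insert, mem_filter, mem_univ, true_and]
      constructor
      · rintro (rfl | h5)
        · exact ⟨le_rfl, hm.le, hs⟩
        · exact ⟨by omega, h5.2⟩
      · intro h5
        by_cases h6 : (i : ℕ) = m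
        · exact Or.inl (Fin.ext h6)
        · exact Or.inr ⟨by omega, h5.2⟩
    | false =>
      rw [hs, if_neg (by simp)] at h1
      rw [hookFrom, if_neg (by omega),
        show (P.pt m - P.pt p).toNat - 1 = (P.pt (m + 1) - P.pt p).toNat by omega, h2]
      congr 1
      ext i
      simp only [mem_filter, mem_univ, true_and]
      constructor
      · rintro ⟨h5, h6⟩
        exact ⟨by omega, h6⟩
      · rintro ⟨h5, h6, h7⟩
        refine ⟨?_, h6, h7⟩
        by_contra h8
        have : i = ⟨m, hm2⟩ := Fin.ext (by simp only; omega)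
        rw [this, hs] at h7
        simp at h7

theorem wordProd_drop {n : ℕ} (P : DyckPath n) (m : ℕ) (hm : m ≤ 2 * n) :
    wordProd ((pathWord P).drop m) =
      ∏ i ∈ univ.filter (fun i : Fin (2 * n) => m ≤ (i : ℕ) ∧ P.step i = true),
        hookFrom 0 ((pathWord P).drop i) := by
  induction hm using Nat.decreasingInduction with
  | self =>
    rw [List.drop_eq_nil_of_le (pathWord_length P).le, wordProd, filter_false_of_mem]
    · rfl
    · intro i _; omega
  | of_succ m hm ih =>
    rw [pathWord_drop P m hm]
    cases hs : P.step ⟨m, hm⟩ with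
    | true =>
      have h1 : (univ.filter fun i : Fin (2 * n) => m ≤ (i : ℕ) ∧ P.step i = true) =
          insert ⟨m, hm⟩ (univ.filter fun i : Fin (2 * n) => m + 1 ≤ (i : ℕ) ∧ P.step i = true) := by
        ext i
        simp only [mem_insert, mem_filter, mem_univ, true_and]
        constructor
        · intro h5
          by_cases h6 : (i : ℕ) = m
          · exact Or.inl (Fin.ext h6)
          · exact Or.inr ⟨by omega, h5.2⟩
        · rintro (rfl | h5)
          · exact ⟨le_rfl, hs⟩
          · exact ⟨by omega, h5.2⟩
      rw [wordProd, h1, prod_insert (by simp), ← ih]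
      simp only
      rw [pathWord_drop P m hm, hs]
    | false =>
      rw [wordProd, ih]
      refine prod_congr ?_ fun _ _ => rfl
      ext i
      simp only [mem_filter, mem_univ, true_and]
      constructor
      · rintro ⟨h5, h6⟩
        exact ⟨by omega, h6⟩
      · rintro ⟨h5, h7⟩
        refine ⟨?_, h7⟩
        by_contra h8
        have : i = ⟨m, hm⟩ := Fin.ext (by simp only; omega)
        rw [this, hs] at h7
        simp at h7

theorem prod_chordLen {n : ℕ} {P : DyckPath n} (C : ChordLabeling P) :
    ∏ i, chordLen C i = wordProd (pathWord P) := by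
  have hl : ∀ i, C.l i < 2 * n := fun i => (C.chord i).2.2.1.choose
  let l : Fin n → Fin (2 * n) := fun i => ⟨C.l i, hl i⟩
  have linj : Function.Injective l := fun i j h => C.inj (Fin.mk.inj_iff.mp h)
  have hu : univ.image l = univ.filter fun i => P.step i = true := by
    refine eq_of_subset_of_card_le ?_ ?_
    · intro j hj
      obtain ⟨i, -, rfl⟩ := mem_image.mp hj
      obtain ⟨_, h⟩ := (C.chord i).2.2.1
      simpa using h
    · rw [P.balanced, card_image_of_injective _ linj, card_univ, Fintype.card_fin]
  have h := wordProd_drop P 0 (Nat.zero_le _)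
  simp only [Nat.zero_le, true_and, List.drop_zero] at h
  rw [h, ← hu, prod_image fun i _ j _ hij => linj hij]
  refine prod_congr rfl fun i _ => ?_
  have h1 := hookFrom_eq_card P _ _ (C.chord i) _ le_rfl (C.chord i).1.le
  rw [sub_self] at h1
  exact h1.symm

theorem runCount_mul_prod_chordLen {n : ℕ} {P : DyckPath n} (C : ChordLabeling P) :
    runCount (pathWord P) [0] * ∏ i, chordLen C i = n.factorial := by
  obtain ⟨τ, hw, rfl⟩ := exists_forest P
  have h := wordProd_word_append τ []
  rw [List.append_nil] at h
  rw [prod_chordLen, hw, h, wordProd, mul_one, runCount_word_mul]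

/-! ### Structure of cover-inclusive tilings -/

theorem mem_skewCells {n : ℕ} (P Q : DyckPath n) (x z : ℤ) :
    (x, z) ∈ skewCells P Q ↔
      -(n : ℤ) < x ∧ x < n ∧ ∃ l : ℕ, z = P.ht x + 2 * l ∧ z + 2 ≤ Q.ht x := by
  have hP := ht_nonneg P x
  simp only [skewCells, mem_filter, mem_product, mem_Icc]
  constructor
  · rintro ⟨⟨⟨h1, h2⟩, h3, h4⟩, h5, h6, h7⟩
    have h8 := ht_parity P x h1 h2
    have h9 : x ≠ -n := by
      rintro rfl
      rw [ht_of_le Q _ le_rfl] at h6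
      omega
    have h10 : x ≠ n := by
      rintro rfl
      rw [ht_of_ge Q _ le_rfl] at h6
      omega
    exact ⟨by omega, by omega, ((z - P.ht x) / 2).toNat, by omega, h6⟩
  · rintro ⟨h1, h2, l, h3, h4⟩
    have h5 := ht_parity P x h1.le h2.le
    have h6 := ht_le_left Q x h1.le h2.le
    have h7 := ht_le_right Q x h1.le h2.le
    refine ⟨⟨⟨h1.le, h2.le⟩, by omega, by omega⟩, by omega, h4, by omega⟩

theorem dyckTile_eq_of_fst_eq {t : Finset (ℤ × ℤ)} (ht : IsDyckTile t) {x z w : ℤ}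
    (h1 : (x, z) ∈ t) (h2 : (x, w) ∈ t) : z = w := by
  obtain ⟨a, b, f, -, -, -, -, rfl⟩ := ht
  simp only [mem_image, Prod.mk.injEq] at h1 h2
  obtain ⟨_, -, rfl, rfl⟩ := h1
  obtain ⟨_, -, rfl, rfl⟩ := h2
  rfl

theorem dyckTile_adjacent {t : Finset (ℤ × ℤ)} (ht : IsDyckTile t) {x y z w : ℤ}
    (h1 : (x, z) ∈ t) (h2 : (y, w) ∈ t) (hxy : y = x + 1 ∨ y = x - 1) :
    w = z + 1 ∨ w = z - 1 := by
  obtain ⟨a, b, f, -, hs, -, -, rfl⟩ := ht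
  simp only [mem_image, mem_Icc, Prod.mk.injEq] at h1 h2
  obtain ⟨x, hx, rfl, rfl⟩ := h1
  obtain ⟨y, hy, rfl, rfl⟩ := h2
  rcases hxy with rfl | rfl
  · exact hs x hx.1 (by omega)
  · have := hs (x - 1) hy.1 (by omega)
    rw [sub_add_cancel] at this
    omega

section Tiling

variable {n : ℕ} (T : DyckTiling n)

/-- The box over column `x` at level `l` above the lower path. -/
def box (P : DyckPath n) (l : ℕ) (x : ℤ) : ℤ × ℤ := (x, P.ht x + 2 * l)

theorem mem_tile {t : Finset (ℤ × ℤ)} (ht : t ∈ T.tiles) {x z : ℤ} (h : (x, z) ∈ t) :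
    -(n : ℤ) < x ∧ x < n ∧ ∃ l : ℕ, z = T.lower.ht x + 2 * l ∧ z + 2 ≤ T.upper.ht x := by
  rw [← mem_skewCells, ← T.cover, mem_biUnion]
  exact ⟨t, ht, h⟩

theorem box_mem_tile {t : Finset (ℤ × ℤ)} (ht : t ∈ T.tiles) {x : ℤ} {l : ℕ}
    (h : box T.lower l x ∈ t) :
    -(n : ℤ) < x ∧ x < n ∧ T.lower.ht x + 2 * l + 2 ≤ T.upper.ht x := by
  obtain ⟨h1, h2, l', h3, h4⟩ := mem_tile T ht h
  exact ⟨h1, h2, h4⟩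

theorem exists_tile {x : ℤ} {l : ℕ} (h1 : -(n : ℤ) < x) (h2 : x < n)
    (h : T.lower.ht x + 2 * l + 2 ≤ T.upper.ht x) : ∃ t ∈ T.tiles, box T.lower l x ∈ t := by
  have h3 : box T.lower l x ∈ skewCells T.lower T.upper :=
    (mem_skewCells _ _ _ _).mpr ⟨h1, h2, l, rfl, h⟩
  rw [← T.cover, mem_biUnion] at h3
  exact h3

theorem tile_unique {t u : Finset (ℤ × ℤ)} (ht : t ∈ T.tiles) (hu : u ∈ T.tiles) {c : ℤ × ℤ}
    (h1 : c ∈ t) (h2 : c ∈ u) : t = u := by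
  by_contra h
  exact disjoint_left.mp (T.disj t ht u hu h) h1 h2

theorem tile_level_adjacent (hT : T.CoverInclusive) (l : ℕ) {t : Finset (ℤ × ℤ)}
    (ht : t ∈ T.tiles) {x y : ℤ} (hxy : y = x + 1 ∨ y = x - 1) (h1 : box T.lower l x ∈ t)
    (h2 : box T.lower (l + 1) y ∈ t) : False := by
  induction l generalizing t with
  | zero =>
    have hx := box_mem_tile T ht h1
    have hy := box_mem_tile T ht h2
    obtain ⟨u, hu, hyu⟩ := exists_tile T (l := 0) hy.1 hy.2.1 (by push_cast at *; omega)
    obtain ⟨g, hg⟩ := hT t ht u hu ⟨_, h2, _, hyu, rfl, by simp [box]⟩ _ h1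
    have ha := dyckTile_adjacent (T.isDyck t ht) h1 h2 hxy
    have hb := dyckTile_adjacent (T.isDyck u hu) hg hyu hxy
    obtain ⟨-, -, m, hm, -⟩ := mem_tile T hu hg
    have hs : T.lower.ht y = T.lower.ht x + 1 ∨ T.lower.ht y = T.lower.ht x - 1 := by
      rcases hxy with rfl | rfl
      · exact ht_step _ x hx.1.le hx.2.1
      · have := ht_step T.lower (x - 1) hy.1.le hy.2.1
        rw [sub_add_cancel] at this
        omega
    simp only [box] at ha hb hm hg
    have hgx : g = T.lower.ht x + 2 * (0 : ℕ) := by push_cast at *; omega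
    rw [hgx] at hg
    have := tile_unique T ht hu h1 hg
    subst this
    have := dyckTile_eq_of_fst_eq (T.isDyck t ht) h2 hyu
    push_cast at this
    omega
  | succ l ih =>
    have hx := box_mem_tile T ht h1
    have hy := box_mem_tile T ht h2
    obtain ⟨u, hu, hyu⟩ := exists_tile T (l := l + 1) hy.1 hy.2.1 (by push_cast at *; omega)
    obtain ⟨g, hg⟩ := hT t ht u hu ⟨_, h2, _, hyu, rfl, by simp [box]⟩ _ h1
    have ha := dyckTile_adjacent (T.isDyck t ht) h1 h2 hxy
    have hb := dyckTile_adjacent (T.isDyck u hu) hg hyu hxy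
    have hs : T.lower.ht y = T.lower.ht x + 1 ∨ T.lower.ht y = T.lower.ht x - 1 := by
      rcases hxy with rfl | rfl
      · exact ht_step _ x hx.1.le hx.2.1
      · have := ht_step T.lower (x - 1) hy.1.le hy.2.1
        rw [sub_add_cancel] at this
        omega
    simp only [box] at ha hb hg
    have hgx : g = T.lower.ht x + 2 * (l + 1 : ℕ) ∨ g = T.lower.ht x + 2 * l := by
      push_cast at *; omega
    rcases hgx with hgx | hgx
    · rw [hgx] at hg
      have := tile_unique T ht hu h1 hg
      subst this
      have := dyckTile_eq_of_fst_eq (T.isDyck t ht) h2 hyu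
      push_cast at this
      omega
    · rw [hgx] at hg
      exact ih hu hg hyu

/-- Every tile of a cover-inclusive tiling is a vertical translate of a piece of the lower path. -/
theorem tile_eq_interval (hT : T.CoverInclusive) {t : Finset (ℤ × ℤ)} (ht : t ∈ T.tiles) :
    ∃ (a b : ℤ) (l : ℕ), a ≤ b ∧ T.lower.ht b = T.lower.ht a ∧
      (∀ x, a ≤ x → x ≤ b → T.lower.ht a ≤ T.lower.ht x) ∧
      t = (Icc a b).image (box T.lower l) := by
  have hD := T.isDyck t ht
  obtain ⟨a, b, f, hab, hs, hfb, hf, hteq⟩ := T.isDyck t ht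
  have hmem : ∀ x, a ≤ x → x ≤ b → (x, f x) ∈ t := by
    intro x h1 h2
    rw [hteq]
    exact mem_image.mpr ⟨x, mem_Icc.mpr ⟨h1, h2⟩, rfl⟩
  obtain ⟨-, -, l, hl, -⟩ := mem_tile T ht (hmem a le_rfl hab)
  have key : ∀ x, a ≤ x → x ≤ b → f x = T.lower.ht x + 2 * l := by
    intro x hx
    induction x, hx using Int.leInduction with
    | base => intro _; exact hl
    | succ x hx ih =>
      intro hxb
      have ih := ih (by omega)
      have hm := hmem x hx (by omega)
      have hm' := hmem (x + 1) (by omega) hxb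
      obtain ⟨h1, h2, -⟩ := mem_tile T ht hm
      obtain ⟨-, -, l', hl', -⟩ := mem_tile T ht hm'
      have h3 := hs x hx (by omega)
      have h4 := ht_step T.lower x h1.le h2
      rw [ih] at hm
      rw [hl'] at hm'
      have h5 : l' ≠ l + 1 := by
        rintro rfl
        exact tile_level_adjacent T hT l ht (Or.inl rfl) hm hm'
      have h6 : l ≠ l' + 1 := by
        rintro rfl
        exact tile_level_adjacent T hT l' ht (Or.inr (by ring)) hm' hm
      have : l' = l := by omega
      rw [hl', this]
  refine ⟨a, b, l, hab, ?_, ?_, ?_⟩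
  · have h1 := key a le_rfl hab
    have h2 := key b hab le_rfl
    omega
  · intro x h1 h2
    have h3 := key a le_rfl hab
    have h4 := key x h1 h2
    have h5 := hf x h1 h2
    omega
  · rw [hteq]
    refine image_congr fun x hx => ?_
    rw [mem_coe, mem_Icc] at hx
    simp only [box, key x hx.1 hx.2]

theorem mem_image_box {P : DyckPath n} {a b x : ℤ} {l m : ℕ} :
    box P m x ∈ (Icc a b).image (box P l) ↔ a ≤ x ∧ x ≤ b ∧ m = l := by
  simp only [mem_image, mem_Icc, box, Prod.mk.injEq]
  constructor
  · rintro ⟨y, h1, rfl, h2⟩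
    exact ⟨h1.1, h1.2, by omega⟩
  · rintro ⟨h1, h2, rfl⟩
    exact ⟨x, ⟨h1, h2⟩, rfl, rfl⟩

/-- The box over column `x` at level `l` lies in a tile whose base height is at most `h`. -/
def InTileBelow (x h : ℤ) (l : ℕ) : Prop :=
  ∃ t ∈ T.tiles, box T.lower l x ∈ t ∧ ∃ y, T.lower.ht y ≤ h ∧ box T.lower l y ∈ t

/-- `F x h` is the number of tiles over column `x` with base height at most `h`. -/
def Encodes (F : ℤ → ℤ → ℕ) : Prop := ∀ x h l, l < F x h ↔ InTileBelow T x h l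

theorem InTileBelow.pred (hT : T.CoverInclusive) {x h : ℤ} {l : ℕ}
    (hl : InTileBelow T x h (l + 1)) : InTileBelow T x h l := by
  obtain ⟨t, ht, hx, y, hy, hyt⟩ := hl
  obtain ⟨h1, h2, h3⟩ := box_mem_tile T ht hx
  obtain ⟨u, hu, hxu⟩ := exists_tile T (l := l) h1 h2 (by push_cast at h3; omega)
  obtain ⟨z, hz⟩ := hT t ht u hu ⟨_, hx, _, hxu, rfl, by simp [box]⟩ _ hyt
  obtain ⟨a, b, l', -, -, -, rfl⟩ := tile_eq_interval T hT hu
  have hxu' := mem_image_box.mp hxu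
  have hyu : box T.lower l y ∈ (Icc a b).image (box T.lower l') := by
    obtain ⟨y', hy', h4⟩ := mem_image.mp hz
    rw [mem_Icc] at hy'
    have h5 : y' = y := congrArg Prod.fst h4
    exact mem_image_box.mpr ⟨by omega, by omega, hxu'.2.2⟩
  exact ⟨_, hu, hxu, y, hy, hyu⟩

theorem exists_lt_iff_of_pred {p : ℕ → Prop} (hp : ∀ l, p (l + 1) → p l) (N : ℕ)
    (hN : ¬ p N) : ∃ k, ∀ l, l < k ↔ p l := by
  classical
  have hex : ∃ N, ¬ p N := ⟨N, hN⟩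
  refine ⟨Nat.find hex, fun l => ⟨fun h => by simpa using Nat.find_min hex h, fun h => ?_⟩⟩
  by_contra hl
  rw [not_lt] at hl
  have : ∀ m, Nat.find hex ≤ m → ¬ p m := by
    intro m hm
    induction m, hm using Nat.le_induction with
    | base => exact Nat.find_spec hex
    | succ m _ ih => exact fun h => ih (hp m h)
  exact this l hl h

theorem exists_encodes (hT : T.CoverInclusive) : ∃ F, Encodes T F := by
  have h : ∀ x h, ∃ k : ℕ, ∀ l, l < k ↔ InTileBelow T x h l := by
    intro x h
    refine exists_lt_iff_of_pred (fun l => InTileBelow.pred T hT) n ?_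
    rintro ⟨t, ht, hx, -⟩
    obtain ⟨h1, h2, h3⟩ := box_mem_tile T ht hx
    have := ht_le_left T.upper x h1.le h2.le
    have := ht_le_right T.upper x h1.le h2.le
    have := ht_nonneg T.lower x
    omega
  choose F hF using h
  exact ⟨F, hF⟩

theorem InTileBelow.adjacent (hT : T.CoverInclusive) {x y h : ℤ} {l : ℕ}
    (hl : InTileBelow T x h l) (hxy : y = x + 1 ∨ y = x - 1) (hx : h < T.lower.ht x) :
    ∃ t ∈ T.tiles, box T.lower l x ∈ t ∧ box T.lower l y ∈ t ∧
      ∃ w, T.lower.ht w ≤ h ∧ box T.lower l w ∈ t := by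
  obtain ⟨t, ht, hxt, w, hw, hwt⟩ := hl
  obtain ⟨a, b, l', hab, hb, ha, rfl⟩ := tile_eq_interval T hT ht
  refine ⟨_, ht, hxt, ?_, w, hw, hwt⟩
  rw [mem_image_box] at hxt hwt ⊢
  have h1 := ha w hwt.1 hwt.2.1
  have h2 : x ≠ a := by rintro rfl; omega
  have h3 : x ≠ b := by rintro rfl; omega
  omega

/-- Local description of the functions counting tiles by base height over each column. -/
structure IsProfile (P : DyckPath n) (F : ℤ → ℤ → ℕ) : Prop where
  mono : ∀ x : ℤ, Monotone (F x)
  neg : ∀ x h : ℤ, h < 0 → F x h = 0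
  top : ∀ x h : ℤ, P.ht x ≤ h → F x h = F x (P.ht x)
  outside : ∀ x h : ℤ, x ≤ -n ∨ n ≤ x → F x h = 0
  stable : ∀ x h : ℤ, -(n : ℤ) ≤ x → x < n → h < P.ht x → h < P.ht (x + 1) → F x h = F (x + 1) h
  up : ∀ x : ℤ, -(n : ℤ) ≤ x → x < n → P.ht (x + 1) = P.ht x + 1 →
    F (x + 1) (P.ht x) ≤ F x (P.ht x) ∧
      (F (x + 1) (P.ht (x + 1)) = F x (P.ht x) ∨ F (x + 1) (P.ht (x + 1)) + 1 = F x (P.ht x))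
  down : ∀ x : ℤ, -(n : ℤ) ≤ x → x < n → P.ht (x + 1) = P.ht x - 1 →
    F (x + 1) (P.ht (x + 1)) = F x (P.ht x) ∨ F (x + 1) (P.ht (x + 1)) = F x (P.ht x) + 1

variable {T} {F : ℤ → ℤ → ℕ}

theorem Encodes.le_of_imp (hF : Encodes T F) {x y g h : ℤ}
    (hi : ∀ l, InTileBelow T x g l → InTileBelow T y h l) : F x g ≤ F y h := by
  by_contra hlt
  rw [not_le] at hlt
  exact lt_irrefl _ ((hF y h _).mpr (hi _ ((hF x g _).mp hlt)))

theorem inTileBelow_ht_iff {x : ℤ} {h : ℤ} (hh : T.lower.ht x ≤ h) {l : ℕ} :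
    InTileBelow T x h l ↔
      -(n : ℤ) < x ∧ x < n ∧ T.lower.ht x + 2 * l + 2 ≤ T.upper.ht x := by
  constructor
  · rintro ⟨t, ht, hx, -⟩
    exact box_mem_tile T ht hx
  · rintro ⟨h1, h2, h3⟩
    obtain ⟨t, ht, hx⟩ := exists_tile T h1 h2 h3
    exact ⟨t, ht, hx, x, hh, hx⟩

theorem Encodes.upper_ht (hF : Encodes T F) (x : ℤ) (h1 : -(n : ℤ) ≤ x) (h2 : x ≤ n) :
    T.upper.ht x = T.lower.ht x + 2 * F x (T.lower.ht x) := by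
  have hb := T.below x
  have hp := ht_parity T.lower x h1 h2
  have hq := ht_parity T.upper x h1 h2
  have key : ∀ l : ℕ, l < F x (T.lower.ht x) ↔ T.lower.ht x + 2 * l + 2 ≤ T.upper.ht x := by
    intro l
    rw [hF, inTileBelow_ht_iff le_rfl]
    refine ⟨fun h => h.2.2, fun h => ?_⟩
    have := ht_le_left T.upper x h1 h2
    have := ht_le_right T.upper x h1 h2
    have := ht_nonneg T.lower x
    omega
  have k1 := key (F x (T.lower.ht x))
  rcases Nat.eq_zero_or_pos (F x (T.lower.ht x)) with h | h
  · rw [h] at k1 ⊢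
    simp at k1
    push_cast at *
    omega
  · have k2 := (key (F x (T.lower.ht x) - 1)).mp (by omega)
    have := mt k1.mpr (lt_irrefl _)
    omega

theorem Encodes.isProfile (hT : T.CoverInclusive) (hF : Encodes T F) :
    IsProfile T.lower F where
  mono x g h hgh := hF.le_of_imp fun l ⟨t, ht, hx, y, hy, hyt⟩ =>
    ⟨t, ht, hx, y, hy.trans hgh, hyt⟩
  neg x h hh := by
    rw [← Nat.le_zero, ← not_lt, hF]
    rintro ⟨t, ht, hx, y, hy, hyt⟩
    have := ht_nonneg T.lower y
    omega
  top x h hh := by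
    refine le_antisymm (hF.le_of_imp fun l => ?_) (hF.le_of_imp fun l => ?_) <;>
      rw [inTileBelow_ht_iff hh, inTileBelow_ht_iff le_rfl] <;> exact id
  outside x h hx := by
    rw [← Nat.le_zero, ← not_lt, hF]
    rintro ⟨t, ht, hxt, -⟩
    have := box_mem_tile T ht hxt
    omega
  stable x h _ _ h3 h4 := by
    refine le_antisymm (hF.le_of_imp fun l hl => ?_) (hF.le_of_imp fun l hl => ?_)
    · obtain ⟨t, ht, -, hy, hw⟩ := hl.adjacent T hT (Or.inl rfl) h3
      exact ⟨t, ht, hy, hw⟩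
    · obtain ⟨t, ht, -, hy, hw⟩ := hl.adjacent T hT (y := x) (Or.inr (by ring)) h4
      exact ⟨t, ht, hy, hw⟩
  up x h1 h2 hup := by
    refine ⟨hF.le_of_imp fun l hl => ?_, ?_⟩
    · obtain ⟨t, ht, -, hy, hw⟩ := hl.adjacent T hT (y := x) (Or.inr (by ring)) (by omega)
      exact ⟨t, ht, hy, hw⟩
    · have := hF.upper_ht x h1 h2.le
      have := hF.upper_ht (x + 1) (by omega) (by omega)
      have := ht_step T.upper x h1 h2
      omega
  down x h1 h2 hdown := by
    have := hF.upper_ht x h1 h2.le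
    have := hF.upper_ht (x + 1) (by omega) (by omega)
    have := ht_step T.upper x h1 h2
    omega

end Tiling


/-! ### Recovering a tiling from its profile -/

section Blocks

variable {n : ℕ}

/-- The boxes over columns `z` and `z + 1` at level `l` belong to the same tile. -/
def Link (P : DyckPath n) (F : ℤ → ℤ → ℕ) (l : ℕ) (z : ℤ) : Prop :=
  l < F z (min (P.ht z) (P.ht (z + 1))) ∧ l < F (z + 1) (min (P.ht z) (P.ht (z + 1)))

/-- The columns of a tile at level `l` form the interval `[a, b]`. -/
structure IsBlock (P : DyckPath n) (F : ℤ → ℤ → ℕ) (l : ℕ) (a b : ℤ) : Prop where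
  le : a ≤ b
  lt : ∀ x, a ≤ x → x ≤ b → l < F x (P.ht x)
  link : ∀ z, a ≤ z → z < b → Link P F l z
  left : ¬ Link P F l (a - 1)
  right : ¬ Link P F l b

variable {P : DyckPath n} {F : ℤ → ℤ → ℕ}

theorem IsProfile.inside (hF : IsProfile P F) {x h : ℤ} {l : ℕ} (hl : l < F x h) :
    -(n : ℤ) < x ∧ x < n := by
  by_contra hx
  rw [hF.outside x h (by omega)] at hl
  omega

theorem IsProfile.lt_ht (hF : IsProfile P F) {x h : ℤ} {l : ℕ} (hl : l < F x h) :
    l < F x (P.ht x) := by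
  rcases le_total h (P.ht x) with hh | hh
  · exact hl.trans_le (hF.mono x hh)
  · rwa [hF.top x h hh] at hl

theorem Link.of_le {l m : ℕ} {z : ℤ} (h : Link P F l z) (hm : m ≤ l) : Link P F m z :=
  ⟨hm.trans_lt h.1, hm.trans_lt h.2⟩

theorem Link.lt_iff (hF : IsProfile P F) {l : ℕ} {z : ℤ} (hz : Link P F l z) (h : ℤ) :
    l < F z h ↔ l < F (z + 1) h := by
  rcases le_or_gt (min (P.ht z) (P.ht (z + 1))) h with hm | hm
  · exact iff_of_true (hz.1.trans_le (hF.mono _ hm)) (hz.2.trans_le (hF.mono _ hm))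
  · rw [lt_min_iff] at hm
    have := hF.inside hz.1
    rw [hF.stable z h this.1.le this.2 hm.1 hm.2]

theorem IsProfile.ht_le_of_right (hF : IsProfile P F) {l : ℕ} {b h : ℤ} (hb : ¬ Link P F l b)
    (hl : l < F b h) : P.ht b ≤ h := by
  by_contra hh
  rw [not_le] at hh
  obtain ⟨h1, h2⟩ := hF.inside hl
  apply hb
  rcases ht_step P b h1.le h2 with hs | hs
  · have hm : min (P.ht b) (P.ht (b + 1)) = P.ht b := by omega
    rw [Link, hm]
    refine ⟨hl.trans_le (hF.mono b hh.le), ?_⟩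
    rw [hF.stable b h h1.le h2 hh (by omega)] at hl
    exact hl.trans_le (hF.mono _ hh.le)
  · have hm : min (P.ht b) (P.ht (b + 1)) = P.ht (b + 1) := by omega
    rw [Link, hm]
    refine ⟨hl.trans_le (hF.mono b (by omega)), ?_⟩
    have h3 := hF.lt_ht hl
    have h4 := hF.down b h1.le h2 hs
    omega

theorem IsProfile.ht_le_of_left (hF : IsProfile P F) {l : ℕ} {a h : ℤ}
    (ha : ¬ Link P F l (a - 1)) (hl : l < F a h) : P.ht a ≤ h := by
  obtain ⟨c, rfl⟩ : ∃ c, a = c + 1 := ⟨a - 1, by ring⟩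
  rw [add_sub_cancel_right] at ha
  by_contra hh
  rw [not_le] at hh
  obtain ⟨h1, h2⟩ := hF.inside hl
  apply ha
  rcases ht_step P c (by omega) (by omega) with hs | hs
  · have hm : min (P.ht c) (P.ht (c + 1)) = P.ht c := by omega
    rw [Link, hm]
    have h3 : l < F (c + 1) (P.ht c) := hl.trans_le (hF.mono _ (by omega))
    exact ⟨h3.trans_le (hF.up c (by omega) (by omega) hs).1, h3⟩
  · have hm : min (P.ht c) (P.ht (c + 1)) = P.ht (c + 1) := by omega
    rw [Link, hm]
    refine ⟨?_, hl.trans_le (hF.mono _ hh.le)⟩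
    rw [← hF.stable c h (by omega) (by omega) (by omega) hh] at hl
    exact hl.trans_le (hF.mono _ hh.le)

theorem IsBlock.lt_iff (hF : IsProfile P F) {l : ℕ} {a b : ℤ} (hB : IsBlock P F l a b) (h : ℤ)
    {x : ℤ} (hx : a ≤ x) (hxb : x ≤ b) : l < F x h ↔ l < F a h := by
  induction x, hx using Int.leInduction with
  | base => rfl
  | succ x hx ih =>
    rw [← ih (by omega), (hB.link x hx (by omega)).lt_iff hF]

theorem IsBlock.ht_left_le (hF : IsProfile P F) {l : ℕ} {a b : ℤ} (hB : IsBlock P F l a b)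
    {x : ℤ} (hx : a ≤ x) (hxb : x ≤ b) : P.ht a ≤ P.ht x :=
  hF.ht_le_of_left hB.left ((hB.lt_iff hF _ hx hxb).mp (hB.lt x hx hxb))

theorem IsBlock.ht_right_le (hF : IsProfile P F) {l : ℕ} {a b : ℤ} (hB : IsBlock P F l a b)
    {x : ℤ} (hx : a ≤ x) (hxb : x ≤ b) : P.ht b ≤ P.ht x :=
  hF.ht_le_of_right hB.right ((hB.lt_iff hF _ hB.le le_rfl).mpr
    ((hB.lt_iff hF _ hx hxb).mp (hB.lt x hx hxb)))

theorem IsBlock.inside (hF : IsProfile P F) {l : ℕ} {a b : ℤ} (hB : IsBlock P F l a b) :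
    -(n : ℤ) < a ∧ b < n :=
  ⟨(hF.inside (hB.lt a le_rfl hB.le)).1, (hF.inside (hB.lt b hB.le le_rfl)).2⟩

theorem IsBlock.subset {l m : ℕ} {a b c d x : ℤ} (hB : IsBlock P F l a b)
    (hC : IsBlock P F m c d) (hm : m ≤ l) (h1 : a ≤ x) (h2 : x ≤ b) (h3 : c ≤ x) (h4 : x ≤ d) :
    c ≤ a ∧ b ≤ d := by
  constructor
  · by_contra h
    exact hC.left ((hB.link (c - 1) (by omega) (by omega)).of_le hm)
  · by_contra h
    exact hC.right ((hB.link d (by omega) (by omega)).of_le hm)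

theorem IsBlock.unique {l : ℕ} {a b c d x : ℤ} (hB : IsBlock P F l a b)
    (hC : IsBlock P F l c d) (h1 : a ≤ x) (h2 : x ≤ b) (h3 : c ≤ x) (h4 : x ≤ d) :
    a = c ∧ b = d := by
  have := hB.subset hC le_rfl h1 h2 h3 h4
  have := hC.subset hB le_rfl h3 h4 h1 h2
  omega

theorem IsProfile.exists_block (hF : IsProfile P F) {l : ℕ} {x : ℤ} (hl : l < F x (P.ht x)) :
    ∃ a b, IsBlock P F l a b ∧ a ≤ x ∧ x ≤ b := by
  obtain ⟨h1, h2⟩ := hF.inside hl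
  have hout : ∀ z : ℤ, z ≤ -n ∨ n ≤ z → ¬ Link P F l z := by
    intro z hz hL
    have := hF.inside hL.1
    omega
  obtain ⟨b, ⟨hb1, hb2⟩, hb3⟩ := Int.exists_least_of_bdd
    (P := fun z => x ≤ z ∧ ¬ Link P F l z) ⟨x, fun z h => h.1⟩ ⟨n, h2.le, hout n (by omega)⟩
  obtain ⟨a, ⟨ha1, ha2⟩, ha3⟩ := Int.exists_greatest_of_bdd
    (P := fun z => z ≤ x ∧ ¬ Link P F l (z - 1)) ⟨x, fun z h => h.1⟩
    ⟨-n, h1.le, hout _ (by omega)⟩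
  have hlink : ∀ z, a ≤ z → z < b → Link P F l z := by
    intro z h3 h4
    by_contra hz
    rcases le_or_gt x z with h5 | h5
    · have := hb3 z ⟨h5, hz⟩
      omega
    · have := ha3 (z + 1) ⟨by omega, by rwa [add_sub_cancel_right]⟩
      omega
  refine ⟨a, b, ⟨by omega, ?_, hlink, ha2, hb2⟩, ha1, hb1⟩
  intro y hy hyb
  rcases hyb.lt_or_eq with h | rfl
  · exact hF.lt_ht (hlink y hy h).1
  · rcases hb1.lt_or_eq with h | rfl
    · have := (hlink (y - 1) (by omega) (by omega)).2
      rw [sub_add_cancel] at this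
      exact hF.lt_ht this
    · exact hl

/-- The tiles spanned by the blocks of a profile. -/
def tilesOf (P : DyckPath n) (F : ℤ → ℤ → ℕ) : Finset (Finset (ℤ × ℤ)) := by
  classical
  exact (((Icc (-(n : ℤ)) n ×ˢ Icc (-(n : ℤ)) n) ×ˢ
    range ((Icc (-(n : ℤ)) n).sup fun x => F x (P.ht x))).filter
      fun c => IsBlock P F c.2 c.1.1 c.1.2).image
        fun c => (Icc c.1.1 c.1.2).image (box P c.2)

theorem mem_tilesOf (hF : IsProfile P F) {t : Finset (ℤ × ℤ)} :
    t ∈ tilesOf P F ↔ ∃ a b l, IsBlock P F l a b ∧ t = (Icc a b).image (box P l) := by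
  simp only [tilesOf, mem_image, mem_filter, mem_product, mem_Icc, mem_range, Prod.exists]
  constructor
  · rintro ⟨a, b, l, ⟨-, h⟩, rfl⟩
    exact ⟨a, b, l, h, rfl⟩
  · rintro ⟨a, b, l, h, rfl⟩
    obtain ⟨h1, h2⟩ := h.inside hF
    have h3 := h.le
    refine ⟨a, b, l, ⟨⟨⟨⟨by omega, by omega⟩, by omega, by omega⟩, ?_⟩, h⟩, rfl⟩
    exact (h.lt a le_rfl h3).trans_le
      (le_sup (f := fun x => F x (P.ht x)) (mem_Icc.mpr ⟨h1.le, by omega⟩))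

theorem IsBlock.isDyckTile (hF : IsProfile P F) {l : ℕ} {a b : ℤ} (hB : IsBlock P F l a b) :
    IsDyckTile ((Icc a b).image (box P l)) := by
  obtain ⟨h1, h2⟩ := hB.inside hF
  refine ⟨a, b, fun x => P.ht x + 2 * l, hB.le, ?_, ?_, ?_, rfl⟩
  · intro x h3 h4
    have := ht_step P x (by omega) (by omega)
    simp only
    omega
  · have := hB.ht_left_le hF hB.le le_rfl
    have := hB.ht_right_le hF le_rfl hB.le
    simp only
    omega
  · intro x h3 h4
    have := hB.ht_left_le hF h3 h4
    simp only
    omega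

theorem exists_box_of_mem {l : ℕ} {a b : ℤ} {c : ℤ × ℤ} (hc : c ∈ (Icc a b).image (box P l)) :
    c = box P l c.1 ∧ a ≤ c.1 ∧ c.1 ≤ b := by
  obtain ⟨x, hx, rfl⟩ := mem_image.mp hc
  exact ⟨rfl, mem_Icc.mp hx⟩

theorem IsProfile.exists_upper (hF : IsProfile P F) :
    ∃ Q : DyckPath n, ∀ x : ℤ, -(n : ℤ) ≤ x → x ≤ n → Q.ht x = P.ht x + 2 * F x (P.ht x) := by
  refine exists_path _ ?_ ?_ ?_ ?_
  · rw [hF.outside _ _ (by omega), ht_of_le P _ le_rfl]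
    rfl
  · rw [hF.outside _ _ (by omega), ht_of_ge P _ le_rfl]
    rfl
  · intro x h1 h2
    rcases ht_step P x h1 h2 with hs | hs
    · have := hF.up x h1 h2 hs
      omega
    · have := hF.down x h1 h2 hs
      omega
  · intro x h1 h2
    have := ht_nonneg P x
    omega

theorem IsProfile.exists_tiling (hF : IsProfile P F) :
    ∃ T : DyckTiling n, T.lower = P ∧ T.CoverInclusive ∧ Encodes T F := by
  obtain ⟨Q, hQ⟩ := hF.exists_upper
  have hbox : ∀ {x : ℤ} {l : ℕ}, (∃ t ∈ tilesOf P F, box P l x ∈ t) ↔ l < F x (P.ht x) := by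
    intro x l
    constructor
    · rintro ⟨t, ht, hx⟩
      obtain ⟨a, b, m, hB, rfl⟩ := (mem_tilesOf hF).mp ht
      obtain ⟨h1, h2, rfl⟩ := mem_image_box.mp hx
      exact hB.lt x h1 h2
    · intro hl
      obtain ⟨a, b, hB, h1, h2⟩ := hF.exists_block hl
      exact ⟨_, (mem_tilesOf hF).mpr ⟨a, b, l, hB, rfl⟩, mem_image_box.mpr ⟨h1, h2, rfl⟩⟩
  refine ⟨⟨P, Q, ?_, tilesOf P F, ?_, ?_, ?_⟩, rfl, ?_, ?_⟩
  · intro x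
    by_cases hx : -(n : ℤ) ≤ x ∧ x ≤ n
    · rw [hQ x hx.1 hx.2]
      omega
    · rcases not_and_or.mp hx with h | h
      · rw [ht_of_le P x (by omega), ht_of_le Q x (by omega)]
      · rw [ht_of_ge P x (by omega), ht_of_ge Q x (by omega)]
  · intro t ht
    obtain ⟨a, b, l, hB, rfl⟩ := (mem_tilesOf hF).mp ht
    exact hB.isDyckTile hF
  · intro t ht u hu htu
    obtain ⟨a, b, l, hB, rfl⟩ := (mem_tilesOf hF).mp ht
    obtain ⟨c, d, m, hC, rfl⟩ := (mem_tilesOf hF).mp hu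
    refine disjoint_left.mpr fun p hp hp' => htu ?_
    obtain ⟨hpe, h1, h2⟩ := exists_box_of_mem hp
    rw [hpe, mem_image_box] at hp'
    obtain ⟨h3, h4, rfl⟩ := hp'
    obtain ⟨rfl, rfl⟩ := hB.unique hC h1 h2 h3 h4
    rfl
  · ext ⟨x, z⟩
    rw [mem_biUnion, mem_skewCells]
    constructor
    · rintro ⟨t, ht, hx⟩
      obtain ⟨a, b, l, hB, rfl⟩ := (mem_tilesOf hF).mp ht
      obtain ⟨hxe, h1, h2⟩ := exists_box_of_mem hx
      have hl := hB.lt x h1 h2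
      obtain ⟨h3, h4⟩ := hF.inside hl
      have hz : z = P.ht x + 2 * l := congrArg Prod.snd hxe
      refine ⟨h3, h4, l, hz, ?_⟩
      rw [hQ x h3.le h4.le]
      omega
    · rintro ⟨h1, h2, l, rfl, h3⟩
      rw [hQ x h1.le h2.le] at h3
      exact hbox.mpr (by omega)
  · intro t ht u hu
    obtain ⟨a, b, l, hB, rfl⟩ := (mem_tilesOf hF).mp ht
    obtain ⟨c, d, m, hC, rfl⟩ := (mem_tilesOf hF).mp hu
    rintro ⟨p, hp, q, hq, hpq, hlt⟩ r hr
    obtain ⟨hpe, h1, h2⟩ := exists_box_of_mem hp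
    obtain ⟨hqe, h3, h4⟩ := exists_box_of_mem hq
    obtain ⟨-, h5, h6⟩ := exists_box_of_mem hr
    rw [hpe, hqe] at hlt
    simp only [box, hpq] at hlt
    have := hB.subset hC (by omega) h1 h2 (hpq ▸ h3) (hpq ▸ h4)
    exact ⟨_, mem_image_box.mpr ⟨by omega, by omega, rfl⟩⟩
  · intro x h l
    constructor
    · intro hl
      obtain ⟨a, b, hB, h1, h2⟩ := hF.exists_block (hF.lt_ht hl)
      exact ⟨_, (mem_tilesOf hF).mpr ⟨a, b, l, hB, rfl⟩, mem_image_box.mpr ⟨h1, h2, rfl⟩, a,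
        hF.ht_le_of_left hB.left ((hB.lt_iff hF h h1 h2).mp hl),
        mem_image_box.mpr ⟨le_rfl, hB.le, rfl⟩⟩
    · rintro ⟨t, ht, hx, y, hy, hyt⟩
      obtain ⟨a, b, m, hB, rfl⟩ := (mem_tilesOf hF).mp ht
      obtain ⟨h1, h2, rfl⟩ := mem_image_box.mp hx
      obtain ⟨h3, h4, -⟩ := mem_image_box.mp hyt
      rw [hB.lt_iff hF h h1 h2, ← hB.lt_iff hF h h3 h4]
      exact (hB.lt y h3 h4).trans_le (hF.mono y hy)

variable {T : DyckTiling n}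

theorem Encodes.link_iff (hT : T.CoverInclusive) (hF : Encodes T F) {l : ℕ} {z : ℤ} :
    Link T.lower F l z ↔ ∃ t ∈ T.tiles, box T.lower l z ∈ t ∧ box T.lower l (z + 1) ∈ t := by
  simp only [Link, hF _ _ _]
  constructor
  · rintro ⟨h1, h2⟩
    obtain ⟨t, ht, hx, -⟩ := id h1
    have h3 := box_mem_tile T ht hx
    rcases ht_step T.lower z h3.1.le h3.2.1 with hs | hs
    · obtain ⟨u, hu, hz, hz', -⟩ := h2.adjacent T hT (y := z) (Or.inr (by ring)) (by omega)
      exact ⟨u, hu, hz', hz⟩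
    · obtain ⟨u, hu, hz, hz', -⟩ := h1.adjacent T hT (Or.inl rfl) (by omega)
      exact ⟨u, hu, hz, hz'⟩
  · rintro ⟨t, ht, h1, h2⟩
    have : ∃ y, T.lower.ht y ≤ min (T.lower.ht z) (T.lower.ht (z + 1)) ∧ box T.lower l y ∈ t := by
      rcases le_total (T.lower.ht z) (T.lower.ht (z + 1)) with h | h
      · exact ⟨z, by omega, h1⟩
      · exact ⟨z + 1, by omega, h2⟩
    exact ⟨⟨t, ht, h1, this⟩, t, ht, h2, this⟩

theorem Encodes.exists_block_of_mem (hT : T.CoverInclusive) (hF : Encodes T F)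
    {t : Finset (ℤ × ℤ)} (ht : t ∈ T.tiles) :
    ∃ a b l, IsBlock T.lower F l a b ∧ t = (Icc a b).image (box T.lower l) := by
  obtain ⟨a, b, l, hab, -, -, hte⟩ := tile_eq_interval T hT ht
  have hmem : ∀ {x}, box T.lower l x ∈ t ↔ a ≤ x ∧ x ≤ b := by
    intro x
    rw [hte, mem_image_box]
    tauto
  refine ⟨a, b, l, ⟨hab, ?_, ?_, ?_, ?_⟩, hte⟩
  · intro x h1 h2
    have hx := hmem.mpr ⟨h1, h2⟩
    exact (hF _ _ _).mpr ⟨t, ht, hx, x, le_rfl, hx⟩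
  · intro z h1 h2
    exact (hF.link_iff hT).mpr ⟨t, ht, hmem.mpr ⟨h1, h2.le⟩, hmem.mpr ⟨by omega, by omega⟩⟩
  · rw [hF.link_iff hT, sub_add_cancel]
    rintro ⟨u, hu, h1, h2⟩
    obtain rfl := tile_unique T hu ht h2 (hmem.mpr ⟨le_rfl, hab⟩)
    have := hmem.mp h1
    omega
  · rw [hF.link_iff hT]
    rintro ⟨u, hu, h1, h2⟩
    obtain rfl := tile_unique T hu ht h1 (hmem.mpr ⟨hab, le_rfl⟩)
    have := hmem.mp h2
    omega

theorem Encodes.tiles_eq (hT : T.CoverInclusive) (hF : Encodes T F) :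
    T.tiles = tilesOf T.lower F := by
  ext t
  rw [mem_tilesOf (hF.isProfile hT)]
  refine ⟨hF.exists_block_of_mem hT, ?_⟩
  rintro ⟨a, b, l, hB, rfl⟩
  obtain ⟨t, ht, ha, -⟩ := (hF _ _ _).mp (hB.lt a le_rfl hB.le)
  obtain ⟨c, d, m, hC, rfl⟩ := hF.exists_block_of_mem hT ht
  obtain ⟨h1, h2, rfl⟩ := mem_image_box.mp ha
  obtain ⟨rfl, rfl⟩ := hB.unique hC le_rfl hB.le h1 h2
  exact ht

theorem Encodes.tiling_unique {T' : DyckTiling n} (hT : T.CoverInclusive)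
    (hT' : T'.CoverInclusive) (hF : Encodes T F) (hF' : Encodes T' F)
    (h : T.lower = T'.lower) : T = T' := by
  have h1 := hF.tiles_eq hT
  have h2 := hF'.tiles_eq hT'
  have h3 : T.upper = T'.upper := by
    refine path_ext _ _ fun x hx hx' => ?_
    rw [hF.upper_ht x hx hx', hF'.upper_ht x hx hx', h]
  rw [h, ← h2] at h1
  cases T
  cases T'
  simp only at h h1 h3
  subst h h1 h3
  rfl

theorem Encodes.unique {G : ℤ → ℤ → ℕ} (hF : Encodes T F) (hG : Encodes T G) : F = G := by
  funext x h
  refine le_antisymm ?_ ?_ <;> by_contra hlt <;> rw [not_le] at hlt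
  · exact lt_irrefl _ ((hG x h _).mpr ((hF x h _).mp hlt))
  · exact lt_irrefl _ ((hF x h _).mpr ((hG x h _).mp hlt))

theorem card_tilings_eq (P : DyckPath n) :
    Nat.card {T : DyckTiling n // T.CoverInclusive ∧ T.lower = P} =
      Nat.card {F : ℤ → ℤ → ℕ // IsProfile P F} := by
  have hex : ∀ T : {T : DyckTiling n // T.CoverInclusive ∧ T.lower = P},
      ∃ F : {F : ℤ → ℤ → ℕ // IsProfile P F}, Encodes T.1 F.1 := by
    rintro ⟨T, hT, rfl⟩
    obtain ⟨F, hF⟩ := exists_encodes T hT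
    exact ⟨⟨F, hF.isProfile hT⟩, hF⟩
  choose f hf using hex
  refine Nat.card_eq_of_bijective f ⟨?_, ?_⟩
  · intro T T' h
    have h' := hf T'
    rw [← h] at h'
    exact Subtype.ext ((hf T).tiling_unique T.2.1 T'.2.1 h' (T.2.2.trans T'.2.2.symm))
  · rintro ⟨F, hF⟩
    obtain ⟨T, hP, hT, hTF⟩ := hF.exists_tiling
    exact ⟨⟨T, hT, hP⟩, Subtype.ext ((hf ⟨T, hT, hP⟩).unique hTF)⟩

end Blocks

/-! ### Profiles and runs -/

section Runs

/-- `s` is a run of the automaton on the word `w`, from the state `S` to the state `[0]`. -/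
structure IsRun (w : List Bool) (S : List ℕ) (s : ℕ → List ℕ) : Prop where
  start : s 0 = S
  step : ∀ p (hp : p < w.length), s (p + 1) ∈ next w[p] (s p)
  ends : s w.length = [0]
  rest : ∀ p, w.length < p → s p = []

theorem isRun_cons_iff {b : Bool} {w : List Bool} {S : List ℕ} {s : ℕ → List ℕ} :
    IsRun (b :: w) S s ↔ s 0 = S ∧ s 1 ∈ next b S ∧ IsRun w (s 1) fun p => s (p + 1) := by
  constructor
  · intro h
    refine ⟨h.start, ?_, rfl, fun p hp => ?_, h.ends, fun p hp => h.rest _ ?_⟩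
    · have := h.step 0 (by simp)
      rwa [h.start] at this
    · exact h.step (p + 1) (by simpa using hp)
    · simpa using hp
  · rintro ⟨h0, h1, h⟩
    refine ⟨h0, ?_, h.ends, ?_⟩
    · rintro (_ | p) hp
      · rwa [h0]
      · exact h.step p (by simpa using hp)
    · rintro (_ | p) hp
      · simp at hp
      · exact h.rest p (by simpa using hp)

/-- Splitting off the first transition of a run. -/
def runConsEquiv (b : Bool) (w : List Bool) (S : List ℕ) :
    {s // IsRun (b :: w) S s} ≃ Σ S' : next b S, {s // IsRun w S'.1 s} where
  toFun s := ⟨⟨s.1 1, (isRun_cons_iff.mp s.2).2.1⟩, fun p => s.1 (p + 1),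
    (isRun_cons_iff.mp s.2).2.2⟩
  invFun c := ⟨fun p => Nat.casesOn p S c.2.1, isRun_cons_iff.mpr
    ⟨rfl, by simp [c.2.2.start], by simpa [c.2.2.start] using c.2.2⟩⟩
  left_inv s := by
    refine Subtype.ext (funext fun p => ?_)
    cases p with
    | zero => exact s.2.start.symm
    | succ p => rfl
  right_inv := by
    rintro ⟨⟨S', hS'⟩, s, hs⟩
    obtain rfl := hs.start
    rfl

theorem finite_and_card_runs (w : List Bool) (S : List ℕ) :
    Finite {s // IsRun w S s} ∧ Nat.card {s // IsRun w S s} = runCount w S := by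
  induction w generalizing S with
  | nil =>
    have hsub : Subsingleton {s // IsRun [] S s} := by
      refine ⟨fun s t => Subtype.ext (funext fun p => ?_)⟩
      rcases Nat.eq_zero_or_pos p with rfl | hp
      · rw [s.2.start, t.2.start]
      · rw [s.2.rest p hp, t.2.rest p hp]
    refine ⟨inferInstance, ?_⟩
    rw [runCount]
    split_ifs with h
    · have : Nonempty {s // IsRun [] S s} :=
        ⟨fun p => if p = 0 then [0] else [], by simp [h], by simp, by simp, by simp; omega⟩
      exact Nat.card_eq_one_iff_unique.mpr ⟨hsub, this⟩
    · have : IsEmpty {s // IsRun [] S s} := ⟨fun s => h (s.2.start.symm.trans s.2.ends)⟩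
      exact Nat.card_of_isEmpty
  | cons b w ih =>
    have hfin : ∀ S' : next b S, Finite {s // IsRun w S'.1 s} := fun S' => (ih S'.1).1
    refine ⟨Finite.of_equiv _ (runConsEquiv b w S).symm, ?_⟩
    rw [Nat.card_congr (runConsEquiv b w S), Nat.card_sigma, runCount,
      ← Finset.sum_coe_sort (next b S) (runCount w)]
    exact Finset.sum_congr rfl fun (S' : next b S) _ => (ih S'.1).2

/-- The list `[f (k - 1), …, f 0]`. -/
def below (f : ℤ → ℕ) : ℕ → List ℕ
  | 0 => []
  | k + 1 => f k :: below f k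

/-- The list `[f k, …, f 0]`. -/
def column (f : ℤ → ℕ) (k : ℕ) : List ℕ := f k :: below f k

/-- `f` is monotone, zero on negative arguments and constant from `k` on. -/
structure IsColumn (f : ℤ → ℕ) (k : ℕ) : Prop where
  mono : Monotone f
  neg : ∀ h, h < 0 → f h = 0
  top : ∀ h, (k : ℤ) ≤ h → f h = f k

theorem below_eq_iff {f g : ℤ → ℕ} {k : ℕ} :
    below f k = below g k ↔ ∀ h : ℤ, 0 ≤ h → h < k → f h = g h := by
  induction k with
  | zero => simp [below]; omega
  | succ k ih =>
    rw [below, below, List.cons.injEq, ih]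
    constructor
    · rintro ⟨h1, h2⟩ h h3 h4
      rcases eq_or_ne h k with rfl | h5
      · exact h1
      · exact h2 h h3 (by push_cast at h4; omega)
    · intro h
      exact ⟨h k (by omega) (by push_cast; omega), fun j h1 h2 => h j h1 (by push_cast; omega)⟩

theorem IsColumn.headD_below {f : ℤ → ℕ} {k : ℕ} (hf : IsColumn f k) (m : ℕ) :
    (below f m).headD 0 = f (m - 1) := by
  cases m with
  | zero => simp [below, hf.neg]
  | succ m => simp [below]

theorem IsColumn.below_eq_iff {f g : ℤ → ℕ} {k l m : ℕ} (hf : IsColumn f k) (hg : IsColumn g l) :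
    below f m = below g m ↔ ∀ h : ℤ, h < m → f h = g h := by
  rw [DyckCount.below_eq_iff]
  refine ⟨fun H h hm => ?_, fun H h _ hm => H h hm⟩
  rcases lt_or_ge h 0 with h0 | h0
  · rw [hf.neg h h0, hg.neg h h0]
  · exact H h h0 hm

theorem IsColumn.eq_of_column_eq {f g : ℤ → ℕ} {k : ℕ} (hf : IsColumn f k) (hg : IsColumn g k)
    (h : column f k = column g k) : f = g := by
  obtain ⟨h1, h2⟩ := List.cons.inj h
  rw [hf.below_eq_iff hg] at h2
  funext j
  rcases lt_or_ge j k with hj | hj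
  · exact h2 j hj
  · rw [hf.top j hj, hg.top j hj, h1]

theorem mem_next_up_iff {f g : ℤ → ℕ} {k : ℕ} (hf : IsColumn f k) (hg : IsColumn g (k + 1)) :
    column g (k + 1) ∈ next true (column f k) ↔
      (∀ h : ℤ, h < k → f h = g h) ∧ g k ≤ f k ∧
        (g (k + 1) = f k ∨ g (k + 1) + 1 = f k) := by
  have h1 := hg.mono (show (k : ℤ) ≤ k + 1 by omega)
  have h2 := hg.mono (show (k : ℤ) - 1 ≤ k by omega)
  rw [← hf.below_eq_iff hg]
  simp only [column, below, next, mem_union, mem_image, mem_Icc, mem_Ico, hf.headD_below,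
    List.cons.injEq, Nat.cast_add, Nat.cast_one]
  constructor
  · rintro (⟨t, ht, h3, rfl, h4⟩ | ⟨t, ht, h3, rfl, h4⟩)
    · exact ⟨h4, by omega, by omega⟩
    · exact ⟨h4, by omega, by omega⟩
  · rintro ⟨h3, h4, h5⟩
    have h6 : f (k - 1) = g (k - 1) := (hf.below_eq_iff hg).mp h3 _ (by omega)
    rcases h5 with h5 | h5
    · exact Or.inl ⟨g k, by omega, by omega, rfl, h3⟩
    · exact Or.inr ⟨g k, by omega, by omega, rfl, h3⟩

theorem mem_next_down_iff {f g : ℤ → ℕ} {k : ℕ} (hf : IsColumn f (k + 1)) (hg : IsColumn g k) :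
    column g k ∈ next false (column f (k + 1)) ↔
      (∀ h : ℤ, h < k → f h = g h) ∧ (g k = f (k + 1) ∨ g k = f (k + 1) + 1) := by
  rw [← hf.below_eq_iff hg]
  simp only [column, below, next, mem_insert, mem_singleton, List.cons.injEq, Nat.cast_add,
    Nat.cast_one]
  rw [eq_comm (a := below f k)]
  tauto

theorem IsColumn.exists_of_mem_next_up {f : ℤ → ℕ} {k : ℕ} (hf : IsColumn f k) {S : List ℕ}
    (hS : S ∈ next true (column f k)) : ∃ g, IsColumn g (k + 1) ∧ S = column g (k + 1) := by
  have key : ∀ i t : ℕ, f (k - 1) ≤ t → t ≤ i →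
      ∃ g, IsColumn g (k + 1) ∧ i :: t :: below f k = column g (k + 1) := by
    intro i t h1 h2
    refine ⟨fun h => if h < k then f h else if h = k then t else i,
      ⟨?_, ?_, ?_⟩, ?_⟩
    · intro a b hab
      have h3 := hf.mono hab
      have h4 : a < k → f a ≤ f (k - 1) := fun h => hf.mono (by omega)
      simp only
      split_ifs <;> omega
    · intro h hh
      rw [if_pos (by omega), hf.neg h hh]
    · intro h hh
      push_cast at hh ⊢
      rw [if_neg (by omega), if_neg (by omega), if_neg (by omega), if_neg (by omega)]
    · simp only [column, below]
      congr 1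
      · simp
      · congr 1
        · simp
        · rw [DyckCount.below_eq_iff]
          intro h _ hh
          simp [hh]
  simp only [column, next, mem_union, mem_image, mem_Icc, mem_Ico, hf.headD_below] at hS
  rcases hS with ⟨t, ht, rfl⟩ | ⟨t, ht, rfl⟩
  · exact key _ _ ht.1 ht.2
  · exact key _ _ ht.1 (by omega)

theorem IsColumn.exists_of_mem_next_down {f : ℤ → ℕ} {k : ℕ} (hf : IsColumn f (k + 1))
    {S : List ℕ} (hS : S ∈ next false (column f (k + 1))) :
    ∃ g, IsColumn g k ∧ S = column g k := by
  have key : ∀ i : ℕ, f (k + 1) ≤ i → ∃ g, IsColumn g k ∧ i :: below f k = column g k := by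
    intro i h1
    refine ⟨fun h => if h < k then f h else i, ⟨?_, ?_, ?_⟩, ?_⟩
    · intro a b hab
      have h3 := hf.mono hab
      have h4 : a < k → f a ≤ f (k + 1) := fun h => hf.mono (by omega)
      simp only
      split_ifs <;> omega
    · intro h hh
      rw [if_pos (by omega), hf.neg h hh]
    · intro h hh
      rw [if_neg (by omega), if_neg (by omega)]
    · simp only [column]
      congr 1
      · simp
      · rw [DyckCount.below_eq_iff]
        intro h _ hh
        simp [hh]
  simp only [column, below, next, mem_insert, mem_singleton, Nat.cast_add, Nat.cast_one] at hS
  rcases hS with rfl | rfl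
  · exact key _ le_rfl
  · exact key _ (by omega)

variable {n : ℕ} {P : DyckPath n} {F : ℤ → ℤ → ℕ}

/-- The run associated with a profile. -/
def profileRun (P : DyckPath n) (F : ℤ → ℤ → ℕ) (p : ℕ) : List ℕ :=
  if p ≤ 2 * n then column (F ((p : ℤ) - n)) (P.ht ((p : ℤ) - n)).toNat else []

theorem IsProfile.isColumn (hF : IsProfile P F) (x : ℤ) : IsColumn (F x) (P.ht x).toNat :=
  ⟨hF.mono x, hF.neg x, by
    rw [Int.toNat_of_nonneg (ht_nonneg P x)]
    exact hF.top x⟩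

theorem pathWord_getElem (P : DyckPath n) (p : ℕ) (hp : p < (pathWord P).length)
    (hp' : p < 2 * n) : (pathWord P)[p] = P.step ⟨p, hp'⟩ := by
  simp [pathWord]

/-- The profile conditions on two consecutive columns, in terms of the automaton. -/
theorem mem_next_iff (P : DyckPath n) {p : ℕ} (hp : p < 2 * n) {x : ℤ} (hx : x + n = p)
    {f g : ℤ → ℕ} (hf : IsColumn f (P.ht x).toNat) (hg : IsColumn g (P.ht (x + 1)).toNat) :
    column g (P.ht (x + 1)).toNat ∈ next (P.step ⟨p, hp⟩) (column f (P.ht x).toNat) ↔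
      (∀ h, h < P.ht x → h < P.ht (x + 1) → f h = g h) ∧
      (P.ht (x + 1) = P.ht x + 1 → g (P.ht x) ≤ f (P.ht x) ∧
        (g (P.ht (x + 1)) = f (P.ht x) ∨ g (P.ht (x + 1)) + 1 = f (P.ht x))) ∧
      (P.ht (x + 1) = P.ht x - 1 →
        g (P.ht (x + 1)) = f (P.ht x) ∨ g (P.ht (x + 1)) = f (P.ht x) + 1) := by
  have hs := ht_succ P ⟨p, hp⟩ x hx
  have h0 := ht_nonneg P x
  have h1 := ht_nonneg P (x + 1)
  obtain ⟨k, hk⟩ := Int.eq_ofNat_of_zero_le h0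
  obtain ⟨m, hm⟩ := Int.eq_ofNat_of_zero_le h1
  rw [hk] at hf hs ⊢
  rw [hm] at hg hs ⊢
  simp only [Int.toNat_natCast] at hf hg ⊢
  cases hb : P.step ⟨p, hp⟩ with
  | true =>
    rw [hb, if_pos rfl] at hs
    obtain rfl : m = k + 1 := by omega
    rw [mem_next_up_iff hf hg]
    push_cast
    constructor
    · rintro ⟨h2, h3, h4⟩
      exact ⟨fun h h5 _ => h2 h h5, fun _ => ⟨h3, h4⟩, by omega⟩
    · rintro ⟨h2, h3, -⟩
      exact ⟨fun h h5 => h2 h h5 (by omega), h3 rfl⟩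
  | false =>
    rw [hb, if_neg (by simp)] at hs
    obtain rfl : k = m + 1 := by omega
    rw [mem_next_down_iff hf hg]
    push_cast
    constructor
    · rintro ⟨h2, h3⟩
      exact ⟨fun h _ h5 => h2 h h5, by omega, fun _ => h3⟩
    · rintro ⟨h2, -, h3⟩
      exact ⟨fun h h5 => h2 h (by omega) h5, h3 (by omega)⟩

theorem IsProfile.isRun (hF : IsProfile P F) : IsRun (pathWord P) [0] (profileRun P F) where
  start := by
    simp [profileRun, ht_of_le P (-(n : ℤ)) le_rfl, column, below, hF.outside (-(n : ℤ))]
  step p hp := by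
    rw [pathWord_length] at hp
    have hx : ((p + 1 : ℕ) : ℤ) - n = (p : ℤ) - n + 1 := by push_cast; ring
    rw [pathWord_getElem P p _ hp, profileRun, profileRun, if_pos (by omega), if_pos (by omega),
      hx, mem_next_iff P hp (by ring) (hF.isColumn _) (hF.isColumn _)]
    exact ⟨fun h => hF.stable _ h (by omega) (by omega), hF.up _ (by omega) (by omega),
      hF.down _ (by omega) (by omega)⟩
  ends := by
    have hx : ((2 * n : ℕ) : ℤ) - n = n := by push_cast; ring
    rw [pathWord_length, profileRun, if_pos le_rfl, hx, ht_of_ge P n le_rfl]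
    simp [column, below, hF.outside (n : ℤ)]
  rest p hp := by
    rw [pathWord_length] at hp
    rw [profileRun, if_neg (by omega)]

theorem profileRun_injective {G : ℤ → ℤ → ℕ} (hF : IsProfile P F) (hG : IsProfile P G)
    (h : profileRun P F = profileRun P G) : F = G := by
  funext x
  by_cases hx : -(n : ℤ) ≤ x ∧ x ≤ n
  · have h1 := congrFun h (x + n).toNat
    have h2 : (((x + n).toNat : ℕ) : ℤ) - n = x := by omega
    rw [profileRun, profileRun, if_pos (by omega), if_pos (by omega), h2] at h1
    exact (hF.isColumn x).eq_of_column_eq (hG.isColumn x) h1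
  · funext h
    rw [hF.outside x h (by omega), hG.outside x h (by omega)]

theorem IsRun.exists_column {s : ℕ → List ℕ} (hs : IsRun (pathWord P) [0] s) (p : ℕ)
    (hp : p ≤ 2 * n) : ∃ f, IsColumn f (P.ht ((p : ℤ) - n)).toNat ∧
      s p = column f (P.ht ((p : ℤ) - n)).toNat := by
  induction p with
  | zero =>
    refine ⟨fun _ => 0, ⟨fun _ _ _ => le_rfl, fun _ _ => rfl, fun _ _ => rfl⟩, ?_⟩
    simp [hs.start, ht_of_le P (-(n : ℤ)) le_rfl, column, below]
  | succ p ih =>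
    obtain ⟨f, hf, hsf⟩ := ih (by omega)
    have hx : ((p + 1 : ℕ) : ℤ) - n = (p : ℤ) - n + 1 := by push_cast; ring
    have hstep := hs.step p (by rw [pathWord_length]; omega)
    rw [pathWord_getElem P p _ (by omega), hsf] at hstep
    have hh := ht_succ P ⟨p, by omega⟩ ((p : ℤ) - n) (by simp)
    have h0 := ht_nonneg P ((p : ℤ) - n)
    have h1 := ht_nonneg P ((p : ℤ) - n + 1)
    rw [hx]
    cases hb : P.step ⟨p, by omega⟩ with
    | true =>
      rw [hb] at hstep hh
      have hk : (P.ht ((p : ℤ) - n + 1)).toNat = (P.ht ((p : ℤ) - n)).toNat + 1 := by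
        simp at hh; omega
      rw [hk]
      exact hf.exists_of_mem_next_up hstep
    | false =>
      rw [hb] at hstep hh
      have hk : (P.ht ((p : ℤ) - n)).toNat = (P.ht ((p : ℤ) - n + 1)).toNat + 1 := by
        simp at hh; omega
      rw [hk] at hf hstep
      exact hf.exists_of_mem_next_down hstep

theorem IsRun.exists_profile {s : ℕ → List ℕ} (hs : IsRun (pathWord P) [0] s) :
    ∃ F, IsProfile P F ∧ profileRun P F = s := by
  have hex : ∀ x : ℤ, ∃ f, IsColumn f (P.ht x).toNat ∧
      (x ≤ -n ∨ n ≤ x → ∀ h, f h = 0) ∧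
      (-(n : ℤ) ≤ x → x ≤ n → s (x + n).toNat = column f (P.ht x).toNat) := by
    intro x
    by_cases hx : -(n : ℤ) ≤ x ∧ x ≤ n
    · obtain ⟨f, hf, hsf⟩ := hs.exists_column (x + n).toNat (by omega)
      have h2 : (((x + n).toNat : ℕ) : ℤ) - n = x := by omega
      rw [h2] at hf hsf
      refine ⟨f, hf, fun hout h => ?_, fun _ _ => hsf⟩
      have h3 : P.ht x = 0 ∧ s (x + n).toNat = [0] := by
        rcases hout with h4 | h4
        · obtain rfl : x = -n := by omega
          exact ⟨ht_of_le P _ le_rfl, by simpa using hs.start⟩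
        · obtain rfl : x = n := by omega
          have h5 := hs.ends
          rw [pathWord_length] at h5
          refine ⟨ht_of_ge P _ le_rfl, ?_⟩
          convert h5 using 2
          omega
      rw [h3.1, h3.2] at hsf
      rw [h3.1] at hf
      have h6 : f 0 = 0 := by simpa [column, below] using hsf.symm
      rcases lt_or_ge h 0 with h7 | h7
      · exact hf.neg h h7
      · rw [hf.top h (by simpa using h7)]
        simpa using h6
    · exact ⟨fun _ => 0, ⟨fun _ _ _ => le_rfl, fun _ _ => rfl, fun _ _ => rfl⟩,
        fun _ _ => rfl, fun h1 h2 => absurd ⟨h1, h2⟩ hx⟩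
  choose F hcol hout hsF using hex
  have hadj : ∀ x : ℤ, -(n : ℤ) ≤ x → x < n → _ := fun x h1 h2 =>
    (mem_next_iff P (p := (x + n).toNat) (by omega) (by omega) (hcol x) (hcol (x + 1))).mp (by
      rw [← hsF x h1 h2.le, ← hsF (x + 1) (by omega) (by omega)]
      have := hs.step (x + n).toNat (by rw [pathWord_length]; omega)
      rw [pathWord_getElem P _ _ (by omega)] at this
      convert this using 2
      omega)
  refine ⟨F, ⟨fun x => (hcol x).mono, fun x => (hcol x).neg, fun x h hh => ?_,
    fun x h hx => hout x hx h, fun x h h1 h2 => (hadj x h1 h2).1 h,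
    fun x h1 h2 => (hadj x h1 h2).2.1, fun x h1 h2 => (hadj x h1 h2).2.2⟩, ?_⟩
  · have h1 := (hcol x).top h
    rw [Int.toNat_of_nonneg (ht_nonneg P x)] at h1
    exact h1 hh
  · funext p
    rw [profileRun]
    split_ifs with hp
    · rw [← hsF _ (by omega) (by omega)]
      congr 1
      omega
    · exact (hs.rest p (by rw [pathWord_length]; omega)).symm

theorem card_profiles (P : DyckPath n) :
    Nat.card {F : ℤ → ℤ → ℕ // IsProfile P F} = runCount (pathWord P) [0] := by
  rw [← (finite_and_card_runs (pathWord P) [0]).2]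
  refine Nat.card_eq_of_bijective
    (fun F => (⟨profileRun P F.1, F.2.isRun⟩ : {s // IsRun (pathWord P) [0] s})) ⟨?_, ?_⟩
  · intro F G h
    exact Subtype.ext (profileRun_injective F.2 G.2 (Subtype.ext_iff.mp h))
  · rintro ⟨s, hs⟩
    obtain ⟨F, hF, rfl⟩ := hs.exists_profile
    exact ⟨⟨F, hF⟩, rfl⟩

end Runs

end DyckCount

/-- For every Dyck path `λ` of order `n`,
`|D(λ,*)| = n! / Π_{chords c of λ} |c|`
(stated in the equivalent cleared-denominator form;
the product over chords is expressed via an arbitrary labeling of the chords). -/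
theorem dyck_tilings_count (n : ℕ) (lam : DyckPath n) (C : ChordLabeling lam) :
    Nat.card {T : DyckTiling n // T.CoverInclusive ∧ T.lower = lam} *
        ∏ i : Fin n, chordLen C i = n.factorial := by
  rw [DyckCount.card_tilings_eq, DyckCount.card_profiles]
  exact DyckCount.runCount_mul_prod_chordLen C

end
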